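/- arXiv:math/0308086 — 2 statements merged into one kernel-verified Lean document; each statement's English description precedes it below -/
import Mathlib

section
/- For every real z > 0, the Barnes G-function satisfies log G(z+1) = (z²/2)·(log z − 3/2) − z·ζ'(0) + ζ'(−1) − ∫₀^∞ x·log(x² + z²)/(e^{2πx} − 1) dx, where ζ' is the derivative of the Riemann zeta function. -/
open Real MeasureTheory Filter

/-- Hurwitz zeta function ζ(s, a) for real a > 0, via analytic continuation. -/
noncomputable def hurwitzZetaReal (s : ℂ) (a : ℝ) : ℂ :=
  HurwitzZeta.hurwitzZeta (a : UnitAddCircle) s -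
    ∑ k ∈ Finset.range (⌈a⌉₊ - 1), ((a - (⌈a⌉₊ - 1) + k : ℝ) : ℂ) ^ (-s)

/-- ζ'(-1, a): derivative of the Hurwitz zeta function w.r.t. s at s = -1. -/
noncomputable def hurwitzZetaDerivNegOne (a : ℝ) : ℂ :=
  deriv (fun s => hurwitzZetaReal s a) (-1)

/-- Logarithm of the Glaisher–Kinkelin constant: log A = 1/12 - ζ'(-1). -/
noncomputable def logA : ℂ := 1 / 12 - deriv riemannZeta (-1)

/-- log G(z+1) for z > 0, via log G(z+1) = z log Γ(z) + ζ'(-1) - ζ'(-1, z). -/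
noncomputable def logBarnesG1p (z : ℝ) : ℂ :=
  z * Real.log (Real.Gamma z) + deriv riemannZeta (-1) - hurwitzZetaDerivNegOne z

/-- log G(x) for x > 0, via the recurrence G(z+1) = Γ(z) G(z) on (0, 1]. -/
noncomputable def logBarnesG (x : ℝ) : ℂ :=
  if x ≤ 1 then logBarnesG1p x - Real.log (Real.Gamma x) else logBarnesG1p (x - 1)

/-- The Barnes G-function (for positive real argument). -/
noncomputable def barnesG (x : ℝ) : ℂ := Complex.exp (logBarnesG x)

/-- The digamma function ψ = (log Γ)'. -/
noncomputable def digamma (x : ℝ) : ℝ := deriv (fun t => Real.log (Real.Gamma t)) x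

/-- The trigamma function ψ⁽¹⁾ = (log Γ)''. -/
noncomputable def trigamma (x : ℝ) : ℝ :=
  deriv (deriv (fun t => Real.log (Real.Gamma t))) x

/-- The Clausen function Cl₂(x) = ∑_{k ≥ 1} sin(k x) / k². -/
noncomputable def clausen2 (x : ℝ) : ℝ := ∑' k : ℕ, Real.sin ((k + 1) * x) / (k + 1) ^ 2

/-- Catalan's constant. -/
noncomputable def catalanConst : ℝ := ∑' k : ℕ, (-1 : ℝ) ^ k / (2 * (k : ℝ) + 1) ^ 2


lemma aux_gamma_int {σ b : ℝ} (hσ : 0 < σ) (hb : 0 < b) :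
    IntegrableOn (fun t : ℝ => t ^ (σ - 1) * Real.exp (-b * t)) (Set.Ioi 0) := by
  have := integrableOn_rpow_mul_exp_neg_mul_rpow (s := σ - 1) (p := 1) (b := b) (by linarith) (by norm_num) hb
  simpa using this

lemma aux_meas (s w : ℂ) : AEStronglyMeasurable (fun t : ℝ => (t : ℂ) ^ (s - 1) * Complex.exp (-(w * t)))
    (volume.restrict (Set.Ioi 0)) := by
  refine ContinuousOn.aestronglyMeasurable ?_ measurableSet_Ioi
  intro t ht
  have : (t : ℂ) ∈ Complex.slitPlane := by simpa [Complex.slitPlane] using ht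
  apply ContinuousAt.continuousWithinAt
  apply ContinuousAt.mul
  · exact (continuousAt_cpow_const this).comp Complex.continuous_ofReal.continuousAt
  · fun_prop

lemma aux_norm (s w : ℂ) {t : ℝ} (ht : 0 < t) :
    ‖(t : ℂ) ^ (s - 1) * Complex.exp (-(w * t))‖ = t ^ (s.re - 1) * Real.exp (-w.re * t) := by
  rw [norm_mul, Complex.norm_cpow_eq_rpow_re_of_pos ht, Complex.norm_exp]
  simp

lemma aux_int (s w : ℂ) (hs : 0 < s.re) (hw : 0 < w.re) :
    IntegrableOn (fun t : ℝ => (t : ℂ) ^ (s - 1) * Complex.exp (-(w * t))) (Set.Ioi 0) := by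
  refine (integrable_norm_iff (aux_meas s w)).1 ?_
  refine (aux_gamma_int hs hw).congr_fun ?_ measurableSet_Ioi
  intro t ht
  exact (aux_norm s w ht).symm

lemma laplace_deriv (s w : ℂ) (hs : 0 < s.re) (hw : 0 < w.re) :
    DifferentiableAt ℂ (fun w : ℂ => ∫ t in Set.Ioi (0:ℝ), (t : ℂ) ^ (s - 1) * Complex.exp (-(w * t))) w := by
  have hb : 0 < w.re / 2 := by positivity
  have key := hasDerivAt_integral_of_dominated_loc_of_deriv_le (𝕜 := ℂ)
    (μ := volume.restrict (Set.Ioi (0:ℝ)))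
    (F := fun w t => (t : ℂ) ^ (s - 1) * Complex.exp (-(w * t))) (x₀ := w)
    (F' := fun w t => -((t : ℂ) ^ ((s+1) - 1) * Complex.exp (-(w * t))))
    (bound := fun t => t ^ ((s.re + 1) - 1) * Real.exp (-(w.re / 2) * t))
    (s := Metric.ball w (w.re / 2)) (Metric.ball_mem_nhds _ hb)
    (Eventually.of_forall fun w => aux_meas s w) (aux_int s w hs hw)
    (aux_meas (s+1) w).neg ?_ (aux_gamma_int (by linarith) hb) ?_
  · exact key.2.differentiableAt
  · refine (ae_restrict_mem measurableSet_Ioi).mono fun t ht v hv => ?_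
    have ht : 0 < t := ht
    rw [norm_neg, aux_norm _ _ ht]
    have h1 : |(v - w).re| < w.re / 2 := by
      refine lt_of_le_of_lt (Complex.abs_re_le_norm _) ?_
      simpa [dist_eq_norm] using hv
    have h2 : w.re / 2 ≤ v.re := by
      have := (abs_lt.1 h1).1
      simp at this; linarith
    simp only [Complex.add_re, Complex.one_re]
    gcongr
  · refine (ae_restrict_mem measurableSet_Ioi).mono fun t ht v hv => ?_
    have ht : 0 < t := ht
    have h0 : (t : ℂ) ≠ 0 := by exact_mod_cast ht.ne'
    have h1 : HasDerivAt (fun v : ℂ => Complex.exp (-(v * t))) (Complex.exp (-(v * t)) * (-(1 * (t:ℂ)))) v :=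
      (((hasDerivAt_id v).mul_const (t:ℂ)).neg).cexp
    convert! h1.const_mul ((t:ℂ)^(s-1)) using 1
    have : (t : ℂ) ^ ((s + 1) - 1) = (t:ℂ)^(s-1) * t := by
      rw [show s + 1 - 1 = (s - 1) + 1 by ring, Complex.cpow_add _ _ h0, Complex.cpow_one]
    rw [this]; ring

lemma laplace_cpow (s w : ℂ) (hs : 0 < s.re) (hw : 0 < w.re) :
    ∫ t in Set.Ioi (0:ℝ), (t : ℂ) ^ (s - 1) * Complex.exp (-(w * t)) = w ^ (-s) * Complex.Gamma s := by
  set U : Set ℂ := {w | 0 < w.re} with hU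
  have hUo : IsOpen U := isOpen_lt continuous_const Complex.continuous_re
  have hUc : IsPreconnected U := (convex_halfSpace_re_gt 0).isPreconnected
  have hf : AnalyticOnNhd ℂ (fun w : ℂ => ∫ t in Set.Ioi (0:ℝ), (t : ℂ) ^ (s - 1) * Complex.exp (-(w * t))) U :=
    DifferentiableOn.analyticOnNhd (fun w hw => (laplace_deriv s w hs hw).differentiableWithinAt) hUo
  have hg : AnalyticOnNhd ℂ (fun w : ℂ => w ^ (-s) * Complex.Gamma s) U := by
    refine DifferentiableOn.analyticOnNhd (fun w hw => DifferentiableAt.differentiableWithinAt ?_) hUo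
    refine DifferentiableAt.mul_const ?_ _
    exact (differentiableAt_id).cpow_const (Or.inl hw)
  refine hf.eqOn_of_preconnected_of_frequently_eq hg hUc (z₀ := 1) (by simp [hU]) ?_ hw
  have hreal : ∀ r : ℝ, 0 < r → ∫ t in Set.Ioi (0:ℝ), (t : ℂ) ^ (s - 1) * Complex.exp (-((r:ℂ) * t)) = (r:ℂ) ^ (-s) * Complex.Gamma s := by
    intro r hr
    rw [Complex.integral_cpow_mul_exp_neg_mul_Ioi hs hr, one_div, Complex.inv_cpow, Complex.cpow_neg]
    rw [Complex.arg_ofReal_of_nonneg hr.le]; exact Real.pi_pos.ne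
  have ht : Tendsto (fun n : ℕ => (((1:ℝ) + 1 / ((n:ℝ) + 1) : ℝ) : ℂ)) atTop (nhdsWithin 1 {1}ᶜ) := by
    refine tendsto_nhdsWithin_iff.2 ⟨?_, Eventually.of_forall fun n => ?_⟩
    · have : Tendsto (fun n : ℕ => ((1:ℝ) + 1 / ((n:ℝ) + 1) : ℝ)) atTop (nhds (1 + 0)) :=
        tendsto_const_nhds.add tendsto_one_div_add_atTop_nhds_zero_nat
      have h2 := (Complex.continuous_ofReal.tendsto _).comp this
      simpa [Function.comp_def] using h2
    · simp only [Set.mem_compl_iff, Set.mem_singleton_iff]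
      intro h
      have h : ((1:ℝ) + 1 / ((n:ℝ) + 1) : ℝ) = 1 := by exact_mod_cast h
      have : 0 < 1 / ((n:ℝ) + 1) := by positivity
      linarith
  refine ht.frequently (Eventually.frequently (Eventually.of_forall fun n => ?_))
  exact hreal _ (by positivity)

lemma sin_exp_int (t b : ℝ) (hb : 0 < b) :
    IntegrableOn (fun x : ℝ => Real.sin (t * x) * Real.exp (-b * x)) (Set.Ioi 0) := by
  refine Integrable.mono' (g := fun x => Real.exp (-b * x)) (integrableOn_exp_mul_Ioi (by linarith) 0) ?_ ?_
  · exact (by fun_prop : Continuous fun x : ℝ => Real.sin (t * x) * Real.exp (-b * x)).aestronglyMeasurable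
  · refine Eventually.of_forall fun x => ?_
    rw [norm_mul, Real.norm_eq_abs, Real.norm_eq_abs, abs_of_pos (Real.exp_pos _)]
    exact mul_le_of_le_one_left (Real.exp_pos _).le (Real.abs_sin_le_one _)

lemma sin_exp_integral (t b : ℝ) (hb : 0 < b) :
    ∫ x in Set.Ioi (0:ℝ), Real.sin (t * x) * Real.exp (-b * x) = t / (t ^ 2 + b ^ 2) := by
  have ha : (⟨-b, t⟩ : ℂ).re < 0 := by simpa using hb
  have h1 := integral_exp_mul_complex_Ioi ha 0
  have h2 := integral_im (𝕜 := ℂ) (integrableOn_exp_mul_complex_Ioi ha 0)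
  simp only [RCLike.im_to_complex] at h2
  rw [h1] at h2
  have h3 : ∀ x : ℝ, (Complex.exp ((⟨-b, t⟩ : ℂ) * x)).im = Real.sin (t * x) * Real.exp (-b * x) := by
    intro x
    rw [Complex.exp_im]; simp; ring
  simp only [h3] at h2
  rw [h2]
  simp [Complex.div_im, Complex.normSq_apply]
  ring

lemma geom_exp {x : ℝ} (hx : 0 < x) :
    HasSum (fun n : ℕ => Real.exp (-(2 * π * (n + 1)) * x)) (1 / (Real.exp (2 * π * x) - 1)) := by
  have h0 : Real.exp (-(2 * π * x)) < 1 := by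
    rw [Real.exp_lt_one_iff]; have := Real.pi_pos; have : 0 < 2 * π * x := by positivity
    linarith
  have h := (hasSum_geometric_of_lt_one (Real.exp_pos _).le h0).mul_left (Real.exp (-(2 * π * x)))
  convert! h using 1
  · ext n
    rw [← Real.exp_nat_mul, ← Real.exp_add]; congr 1; ring
  · have h1 : 1 < Real.exp (2 * π * x) := by
      rw [Real.one_lt_exp_iff]; have := Real.pi_pos; positivity
    rw [Real.exp_neg]
    have : Real.exp (2 * π * x) ≠ 0 := (Real.exp_pos _).ne'
    have : Real.exp (2 * π * x) - 1 ≠ 0 := by linarith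
    field_simp

lemma sin_norm_integral_le (t b : ℝ) (ht : 0 < t) (hb : 0 < b) :
    ∫ x in Set.Ioi (0:ℝ), ‖Real.sin (t * x) * Real.exp (-b * x)‖ ≤ t / b ^ 2 := by
  have hg := aux_gamma_int (σ := 2) (b := b) (by norm_num) hb
  have h2 : ∫ x in Set.Ioi (0:ℝ), x ^ ((2:ℝ) - 1) * Real.exp (-b * x) = 1 / b ^ 2 := by
    have := Real.integral_rpow_mul_exp_neg_mul_Ioi (a := 2) (r := b) (by norm_num) hb
    simp only [neg_mul]
    rw [this, Real.Gamma_two]; simp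
  calc _ ≤ ∫ x in Set.Ioi (0:ℝ), t * (x ^ ((2:ℝ) - 1) * Real.exp (-b * x)) := by
        refine setIntegral_mono_on (sin_exp_int t b hb).norm (hg.const_mul t) measurableSet_Ioi ?_
        intro x hx
        have hx : 0 < x := hx
        rw [norm_mul, Real.norm_eq_abs, Real.norm_eq_abs, abs_of_pos (Real.exp_pos _), ← mul_assoc]
        gcongr
        have := Real.abs_sin_le_abs (x := t * x)
        rw [abs_of_pos (mul_pos ht hx)] at this
        norm_num
        exact this
    _ = _ := by rw [integral_const_mul, h2]; ring

lemma coth_sum {t : ℝ} (ht : 0 < t) :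
    HasSum (fun n : ℕ => t / (t ^ 2 + (2 * π * (n + 1)) ^ 2))
      ((1 / (1 - Real.exp (-t)) - 1 / 2 - 1 / t) / 2) := by
  set x : ℂ := Complex.I * t / (2 * π) with hx
  have hpi := Real.pi_pos
  have hpc : (π : ℂ) ≠ 0 := by exact_mod_cast hpi.ne'
  have htc : (t : ℂ) ≠ 0 := by exact_mod_cast ht.ne'
  have him : 0 < x.im := by
    have : x = ((t / (2 * π) : ℝ) : ℂ) * Complex.I := by rw [hx]; push_cast; ring
    rw [this, Complex.im_ofReal_mul]; simp; positivity
  have hxm : x ∈ Complex.integerComplement := UpperHalfPlane.coe_mem_integerComplement ⟨x, him⟩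
  have hs := (summable_cotTerm hxm).hasSum
  rw [← cot_series_rep' hxm] at hs
  have h2 := hs.mul_left (Complex.I / (4 * π))
  rw [← Complex.hasSum_ofReal]
  convert! h2 using 1
  · ext n
    rw [cotTerm_identity hxm]
    have h3 : (x + (n + 1)) * (x - (n+1)) = - ((t:ℂ) ^ 2 + (2 * π * (n + 1)) ^ 2) / (2 * π) ^ 2 := by
      rw [hx]; field_simp; ring_nf; rw [Complex.I_sq]; ring
    have h4 : ((t:ℂ) ^ 2 + (2 * π * (n + 1)) ^ 2) ≠ 0 := by
      have : (t ^ 2 + (2 * π * (n + 1)) ^ 2) ≠ 0 := by positivity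
      exact_mod_cast this
    rw [h3, hx]
    push_cast
    field_simp
    rw [Complex.I_sq]; ring
  · rw [Complex.cot_pi_eq_exp_ratio]
    have h5 : 2 * π * Complex.I * x = ((-t : ℝ) : ℂ) := by
      rw [hx]; push_cast; field_simp; rw [Complex.I_sq]
    have h6 : Real.exp (-t) < 1 := by rw [Real.exp_lt_one_iff]; linarith
    have h7 : (1 : ℂ) - (Real.exp (-t) : ℂ) ≠ 0 := by
      have : (1 - Real.exp (-t)) ≠ 0 := by linarith
      exact_mod_cast this
    rw [h5, hx, ← Complex.ofReal_exp]
    have hI := Complex.I_ne_zero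
    push_cast at h7 ⊢
    generalize Complex.exp (-(t:ℂ)) = E at *
    field_simp
    ring

lemma legendre {t : ℝ} (ht : 0 < t) :
    ∫ x in Set.Ioi (0:ℝ), Real.sin (t * x) / (Real.exp (2 * π * x) - 1) =
      (1 / (1 - Real.exp (-t)) - 1 / 2 - 1 / t) / 2 := by
  have hpi := Real.pi_pos
  have h := hasSum_integral_of_summable_integral_norm (μ := volume.restrict (Set.Ioi (0:ℝ)))
    (F := fun (n : ℕ) x => Real.sin (t * x) * Real.exp (-(2 * π * (n + 1)) * x))
    (fun n => sin_exp_int t _ (by positivity)) ?_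
  · simp only [fun n : ℕ => sin_exp_integral t (2 * π * (n + 1)) (by positivity)] at h
    rw [← h.unique (coth_sum ht)]
    refine setIntegral_congr_fun measurableSet_Ioi fun x hx => ?_
    have := ((geom_exp hx).mul_left (Real.sin (t * x))).tsum_eq
    rw [this]; ring
  · refine Summable.of_nonneg_of_le (fun n => integral_nonneg fun x => norm_nonneg _)
      (fun n => sin_norm_integral_le t (2 * π * (n + 1)) ht (by positivity)) ?_
    have h1 : Summable fun n : ℕ => 1 / ((n:ℝ) + 1) ^ 2 := by
      have := (summable_nat_add_iff 1).2 (Real.summable_one_div_nat_pow.2 (by norm_num : 1 < 2))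
      exact_mod_cast this
    refine (h1.mul_left (t / (2 * π) ^ 2)).congr fun n => ?_
    field_simp

noncomputable def hQ (a : ℝ) (s : ℂ) (x : ℝ) : ℂ :=
  Complex.I * ((a + x * Complex.I) ^ (-s) - (a - x * Complex.I) ^ (-s))

noncomputable def hQ' (a : ℝ) (s : ℂ) (x : ℝ) : ℂ :=
  Complex.I * (-(Complex.log (a + x * Complex.I) * (a + x * Complex.I) ^ (-s))
    + Complex.log (a - x * Complex.I) * (a - x * Complex.I) ^ (-s))

lemma cpow_bound {a x : ℝ} (ha : 0 < a) {w s : ℂ} (hre : w.re = a) (him : |w.im| ≤ x) {N : ℕ}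
    (hs : ‖s‖ ≤ N) : ‖w ^ s‖ ≤ (a + 1 / a + x) ^ N * Real.exp (π * N) := by
  have hx : 0 ≤ x := (abs_nonneg _).trans him
  have hw0 : w ≠ 0 := by intro h; rw [h] at hre; simp at hre; linarith
  have hwl : a ≤ ‖w‖ := by
    have := Complex.abs_re_le_norm w
    rw [hre, abs_of_pos ha] at this; exact this
  have hwu : ‖w‖ ≤ a + x := by
    have := Complex.norm_le_abs_re_add_abs_im w
    rw [hre, abs_of_pos ha] at this; linarith
  have hwp : 0 < ‖w‖ := by linarith
  have hB1 : 1 ≤ a + 1 / a + x := by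
    have : 1 ≤ a + 1 / a := by
      rcases le_total 1 a with h | h
      · have : 0 < 1 / a := by positivity
        linarith
      · have : 1 ≤ 1 / a := by rw [le_div_iff₀ ha]; linarith
        linarith
    linarith
  have ha' : 0 < 1 / a := by positivity
  have hre' : |s.re| ≤ N := (Complex.abs_re_le_norm s).trans hs
  have him' : |s.im| ≤ N := (Complex.abs_im_le_norm s).trans hs
  rw [Complex.norm_cpow_of_ne_zero hw0, div_eq_mul_inv, ← Real.exp_neg]
  have h1 : ‖w‖ ^ s.re ≤ (a + 1 / a + x) ^ N := by
    rw [← Real.rpow_natCast]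
    rcases le_total 0 s.re with h | h
    · refine (Real.rpow_le_rpow hwp.le (by linarith : ‖w‖ ≤ a + 1 / a + x) h).trans ?_
      exact Real.rpow_le_rpow_of_exponent_le hB1 ((le_abs_self _).trans hre')
    · rw [show s.re = -(-s.re) by ring, Real.rpow_neg hwp.le, ← Real.inv_rpow hwp.le]
      have : ‖w‖⁻¹ ≤ a + 1 / a + x := by
        have : ‖w‖⁻¹ ≤ 1 / a := by rw [one_div]; gcongr
        linarith
      refine (Real.rpow_le_rpow (by positivity) this (by linarith : 0 ≤ -s.re)).trans ?_
      exact Real.rpow_le_rpow_of_exponent_le hB1 ((neg_le_abs _).trans hre')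
  have h2 : -(Complex.arg w * s.im) ≤ π * N := by
    refine (neg_le_abs _).trans ?_
    rw [abs_mul]
    exact mul_le_mul (Complex.abs_arg_le_pi w) him' (abs_nonneg _) Real.pi_pos.le
  gcongr

lemma slit_add {a : ℝ} (ha : 0 < a) (x : ℝ) : (a + x * Complex.I : ℂ) ∈ Complex.slitPlane := by
  left; simpa using ha

lemma slit_sub {a : ℝ} (ha : 0 < a) (x : ℝ) : (a - x * Complex.I : ℂ) ∈ Complex.slitPlane := by
  left; simpa using ha

lemma hQ_bound {a x : ℝ} (ha : 0 < a) (hx : 0 ≤ x) {s : ℂ} {N : ℕ} (hs : ‖s‖ ≤ N) :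
    ‖hQ a s x‖ ≤ 2 * N * Real.exp (π * (N + 1)) * (a + 1 / a + x) ^ (N + 1) * x := by
  have h := Convex.norm_image_sub_le_of_norm_hasDerivWithin_le (𝕜 := ℝ) (s := Set.Icc (-x) x)
    (f := fun y : ℝ => (a + y * Complex.I : ℂ) ^ (-s))
    (f' := fun y : ℝ => -s * (a + y * Complex.I : ℂ) ^ (-s - 1) * Complex.I)
    (C := N * ((a + 1 / a + x) ^ (N + 1) * Real.exp (π * (N + 1 : ℕ))))
    (x := -x) (y := x) ?_ ?_ (convex_Icc _ _) (by simp [hx]) (by simp [hx])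
  · rw [hQ, norm_mul, Complex.norm_I, one_mul]
    simp only [Complex.ofReal_neg, neg_mul, ← sub_eq_add_neg] at h
    refine h.trans (le_of_eq ?_)
    rw [Real.norm_eq_abs, sub_neg_eq_add, abs_of_nonneg (by linarith)]
    push_cast; ring
  · intro y hy
    have h1 : HasDerivAt (fun v : ℂ => (a + v * Complex.I : ℂ)) Complex.I (y:ℂ) := by
      have := ((hasDerivAt_id (y:ℂ)).mul_const Complex.I).const_add (a:ℂ)
      simpa using this
    have h2 := h1.cpow_const (c := -s) (slit_add ha y)
    exact h2.comp_ofReal.hasDerivWithinAt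
  · intro y hy
    rw [norm_mul, norm_mul, Complex.norm_I, mul_one, norm_neg]
    have : ‖-s - 1‖ ≤ (N + 1 : ℕ) := by
      push_cast
      refine (norm_sub_le _ _).trans ?_
      simp [hs]
    have h3 := cpow_bound ha (w := a + y * Complex.I) (x := x) (by simp) (by simpa using abs_le.2 hy) this
    gcongr

lemma hQ_hasDeriv {a : ℝ} (ha : 0 < a) (x : ℝ) (s : ℂ) : HasDerivAt (fun s => hQ a s x) (hQ' a s x) s := by
  have h1 := (hasDerivAt_id s).neg.const_cpow (c := (a + x * Complex.I : ℂ)) (Or.inl (Complex.slitPlane_ne_zero (slit_add ha x)))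
  have h2 := (hasDerivAt_id s).neg.const_cpow (c := (a - x * Complex.I : ℂ)) (Or.inl (Complex.slitPlane_ne_zero (slit_sub ha x)))
  have h3 := (h1.sub h2).const_mul Complex.I
  refine h3.congr_deriv ?_
  simp only [hQ', id, Pi.neg_apply]
  ring

lemma hQ'_bound {a x : ℝ} (ha : 0 < a) (hx : 0 ≤ x) {s : ℂ} {N : ℕ} (hs : ‖s‖ ≤ N) :
    ‖hQ' a s x‖ ≤ 2 * (N + 1 : ℕ) * Real.exp (π * ((N + 1 : ℕ) + 1)) * (a + 1 / a + x) ^ ((N + 1) + 1) * x := by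
  rw [← (hQ_hasDeriv ha x s).deriv]
  have h := Complex.norm_deriv_le_of_forall_mem_sphere_norm_le (f := fun s => hQ a s x) (c := s) (R := 1)
    (C := 2 * (N + 1 : ℕ) * Real.exp (π * ((N + 1 : ℕ) + 1)) * (a + 1 / a + x) ^ ((N + 1) + 1) * x) one_pos
    (Differentiable.diffContOnCl fun s => (hQ_hasDeriv ha x s).differentiableAt) ?_
  · simpa using h
  · intro v hv
    refine hQ_bound ha hx ?_
    have : ‖v - s‖ = 1 := by simpa [dist_eq_norm] using hv
    calc ‖v‖ = ‖s + (v - s)‖ := by congr 1; ring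
      _ ≤ ‖s‖ + ‖v - s‖ := norm_add_le _ _
      _ ≤ _ := by push_cast; rw [this]; gcongr

lemma kern_pos {x : ℝ} (hx : 0 < x) : 0 < Real.exp (2 * π * x) - 1 := by
  have h1 : 1 < Real.exp (2 * π * x) := by
    rw [Real.one_lt_exp_iff]; have := Real.pi_pos; positivity
  linarith

lemma kern_bound {x : ℝ} (hx : 0 < x) : x / (Real.exp (2 * π * x) - 1) ≤ Real.exp (-π * x) := by
  rw [div_le_iff₀ (kern_pos hx)]
  have h1 : Real.exp (-π * x) * (Real.exp (2 * π * x) - 1) = Real.exp (π * x) - Real.exp (-(π * x)) := by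
    rw [mul_sub, ← Real.exp_add]; ring_nf
  rw [h1]
  have h2 := Real.add_one_le_exp (π * x)
  have h3 : Real.exp (-(π * x)) ≤ 1 := by
    rw [Real.exp_le_one_iff]; have := Real.pi_pos; have : 0 < π * x := by positivity
    linarith
  have := Real.pi_gt_three
  nlinarith

lemma poly_exp_int (b C : ℝ) (N : ℕ) :
    IntegrableOn (fun x : ℝ => C * (b + x) ^ N * Real.exp (-π * x)) (Set.Ioi 0) := by
  have hpi := Real.pi_pos
  refine integrable_of_isBigO_exp_neg (b := 1) one_pos (by fun_prop) ?_
  have h1 : (fun x : ℝ => (b + x) ^ N) =o[atTop] (fun x => Real.exp ((1:ℝ) * x)) := by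
    have h := (isLittleO_pow_exp_pos_mul_atTop N (b := 1) one_pos).comp_tendsto
      (tendsto_atTop_add_const_left atTop b tendsto_id)
    refine h.trans_isBigO ?_
    refine Asymptotics.IsBigO.of_bound (Real.exp b) (Eventually.of_forall fun x => ?_)
    simp [Real.exp_add]
  have h2 := (h1.isBigO.const_mul_left C).mul (Asymptotics.isBigO_refl (fun x : ℝ => Real.exp (-π * x)) atTop)
  refine h2.trans ?_
  refine Asymptotics.IsBigO.of_bound 1 ?_
  filter_upwards [eventually_ge_atTop 0] with x hx
  rw [← Real.exp_add, one_mul, Real.norm_eq_abs, Real.norm_eq_abs, Real.abs_exp, Real.abs_exp]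
  rw [one_mul, Real.exp_le_exp]
  have := Real.pi_gt_three
  nlinarith

lemma hQ_cont {a : ℝ} (ha : 0 < a) (s : ℂ) : Continuous (hQ a s) := by
  have h1 : Continuous fun x : ℝ => (a + x * Complex.I : ℂ) := by fun_prop
  have h2 : Continuous fun x : ℝ => (a - x * Complex.I : ℂ) := by fun_prop
  exact continuous_const.mul ((h1.cpow continuous_const (fun x => slit_add ha x)).sub
    (h2.cpow continuous_const (fun x => slit_sub ha x)))

lemma hQ'_cont {a : ℝ} (ha : 0 < a) (s : ℂ) : Continuous (hQ' a s) := by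
  have h1 : Continuous fun x : ℝ => (a + x * Complex.I : ℂ) := by fun_prop
  have h2 : Continuous fun x : ℝ => (a - x * Complex.I : ℂ) := by fun_prop
  exact continuous_const.mul (((h1.clog (fun x => slit_add ha x)).mul
    (h1.cpow continuous_const (fun x => slit_add ha x))).neg.add
    ((h2.clog (fun x => slit_sub ha x)).mul (h2.cpow continuous_const (fun x => slit_sub ha x))))

lemma meas_div {f : ℝ → ℂ} (hf : Continuous f) :
    AEStronglyMeasurable (fun x : ℝ => f x / ((Real.exp (2 * π * x) - 1 : ℝ) : ℂ)) (volume.restrict (Set.Ioi 0)) := by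
  refine ContinuousOn.aestronglyMeasurable ?_ measurableSet_Ioi
  refine ContinuousOn.div hf.continuousOn (by fun_prop) fun x hx => ?_
  exact_mod_cast (kern_pos hx).ne'

lemma div_bound {f : ℝ → ℂ} {x A B : ℝ} (hx : 0 < x) (hA : 0 ≤ A) (h : ‖f x‖ ≤ A * x) (hB : A = B) :
    ‖f x / ((Real.exp (2 * π * x) - 1 : ℝ) : ℂ)‖ ≤ B * Real.exp (-π * x) := by
  subst hB
  rw [norm_div, Complex.norm_real, Real.norm_eq_abs, abs_of_pos (kern_pos hx)]
  calc _ ≤ A * x / (Real.exp (2 * π * x) - 1) := by have := kern_pos hx; gcongr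
    _ = A * (x / (Real.exp (2 * π * x) - 1)) := by ring
    _ ≤ _ := by gcongr; exact kern_bound hx

lemma hI_deriv {a : ℝ} (ha : 0 < a) (s : ℂ) :
    IntegrableOn (fun x : ℝ => hQ' a s x / ((Real.exp (2 * π * x) - 1 : ℝ) : ℂ)) (Set.Ioi 0) ∧
    HasDerivAt (fun s => ∫ x in Set.Ioi (0:ℝ), hQ a s x / ((Real.exp (2 * π * x) - 1 : ℝ) : ℂ))
      (∫ x in Set.Ioi (0:ℝ), hQ' a s x / ((Real.exp (2 * π * x) - 1 : ℝ) : ℂ)) s := by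
  obtain ⟨N, hN⟩ := exists_nat_gt ‖s‖
  refine hasDerivAt_integral_of_dominated_loc_of_deriv_le (𝕜 := ℂ)
    (F := fun s x => hQ a s x / ((Real.exp (2 * π * x) - 1 : ℝ) : ℂ))
    (F' := fun s x => hQ' a s x / ((Real.exp (2 * π * x) - 1 : ℝ) : ℂ))
    (bound := fun x => (2 * (N + 1 : ℕ) * Real.exp (π * ((N + 1 : ℕ) + 1))) * (a + 1 / a + x) ^ ((N + 1) + 1) * Real.exp (-π * x))
    (s := Metric.ball 0 N) (Metric.isOpen_ball.mem_nhds (by simpa using hN))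
    (Eventually.of_forall fun s => meas_div (hQ_cont ha s)) ?_ (meas_div (hQ'_cont ha s)) ?_
    (poly_exp_int _ _ _) ?_
  · refine Integrable.mono' (poly_exp_int (a + 1 / a) (2 * N * Real.exp (π * (N + 1))) (N + 1))
      (meas_div (hQ_cont ha s)) ?_
    refine (ae_restrict_mem measurableSet_Ioi).mono fun x hx => ?_
    have hx : 0 < x := hx
    exact div_bound hx (by positivity) (hQ_bound ha hx.le hN.le) rfl
  · refine (ae_restrict_mem measurableSet_Ioi).mono fun x hx v hv => ?_
    have hx : 0 < x := hx
    refine div_bound hx (by positivity) (hQ'_bound ha hx.le ?_) rfl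
    have : ‖v‖ < N := by simpa using hv
    exact this.le
  · exact Eventually.of_forall fun x v _ => (hQ_hasDeriv ha x v).div_const _

lemma hasSum_hz {a : ℝ} (ha : 0 < a) {s : ℂ} (hs : 1 < s.re) :
    HasSum (fun n : ℕ => 1 / (((n : ℝ) + a : ℝ) : ℂ) ^ s) (hurwitzZetaReal s a) := by
  obtain ⟨m, hm⟩ : ∃ m, ⌈a⌉₊ = m + 1 := Nat.exists_eq_succ_of_ne_zero (Nat.ceil_pos.2 ha).ne'
  have h1 : a ≤ m + 1 := by have := Nat.le_ceil a; rw [hm] at this; exact_mod_cast this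
  have h2 : (m:ℝ) < a := by
    have := Nat.ceil_lt_add_one ha.le; rw [hm] at this; push_cast at this; linarith
  have hb : (a - m) ∈ Set.Icc (0:ℝ) 1 := ⟨by linarith, by linarith⟩
  have hc : ((a : ℝ) : UnitAddCircle) = ((a - m : ℝ) : UnitAddCircle) := by
    have h : ((m : ℝ) : UnitAddCircle) = 0 := (AddCircle.coe_eq_zero_iff (1:ℝ)).2 ⟨m, by simp⟩
    rw [AddCircle.coe_sub, h, sub_zero]
  have h3 := HurwitzZeta.hasSum_hurwitzZeta_of_one_lt_re hb hs
  rw [← hc, ← hasSum_nat_add_iff' m] at h3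
  convert! h3 using 1
  · ext n; push_cast; congr 2; ring
  · rw [hurwitzZetaReal, hm, Nat.add_sub_cancel]
    congr 1
    refine Finset.sum_congr rfl fun k _ => ?_
    rw [Complex.cpow_neg, one_div]
    push_cast; congr 2; ring

lemma hz_mellin {a : ℝ} (ha : 0 < a) {s : ℂ} (hs : 1 < s.re) :
    Complex.Gamma s * hurwitzZetaReal s a =
      ∫ t in Set.Ioi (0:ℝ), (t : ℂ) ^ (s - 1) * ((Real.exp (-a * t) / (1 - Real.exp (-t)) : ℝ) : ℂ) := by
  have h := hasSum_mellin (a := fun _ : ℕ => (1:ℂ)) (p := fun n : ℕ => (n : ℝ) + a)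
    (F := fun t => ((Real.exp (-a * t) / (1 - Real.exp (-t)) : ℝ) : ℂ)) (s := s)
    (fun n => Or.inr (by positivity)) (by linarith) ?_ ?_
  · have h2 := (hasSum_hz ha hs).mul_left (Complex.Gamma s)
    have h3 := h.unique (by simpa [div_eq_mul_inv] using h2)
    rw [← h3, mellin]; simp
  · intro t ht
    have ht : 0 < t := ht
    have h6 : Real.exp (-t) < 1 := by rw [Real.exp_lt_one_iff]; linarith
    have := (hasSum_geometric_of_lt_one (Real.exp_pos _).le h6).mul_left (Real.exp (-a * t))
    rw [← Complex.hasSum_ofReal] at this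
    convert! this using 1
    ext n
    rw [← Real.exp_nat_mul, ← Real.exp_add, one_mul]
    ring_nf
  · have h2 := (hasSum_hz ha hs).summable.norm
    refine h2.congr fun n => ?_
    rw [norm_div, Complex.norm_cpow_eq_rpow_re_of_pos (by positivity)]

lemma fub_int {a : ℝ} (ha : 0 < a) {s : ℂ} (hs : 1 < s.re) :
    Integrable (Function.uncurry fun (t x : ℝ) => (t : ℂ) ^ (s - 1) * Complex.exp (-((a:ℂ) * t)) *
      ((2 * (Real.sin (t * x) / (Real.exp (2 * π * x) - 1)) : ℝ) : ℂ))
      ((volume.restrict (Set.Ioi (0:ℝ))).prod (volume.restrict (Set.Ioi (0:ℝ)))) := by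
  have hg := (aux_gamma_int (σ := s.re + 1) (b := a) (by linarith) ha).const_mul 2
  have hh : IntegrableOn (fun x : ℝ => Real.exp (-π * x)) (Set.Ioi 0) :=
    integrableOn_exp_mul_Ioi (by have := Real.pi_pos; linarith) 0
  refine Integrable.mono' (hg.mul_prod hh) ?_ ?_
  · apply Measurable.aestronglyMeasurable
    unfold Function.uncurry
    fun_prop
  · rw [Measure.prod_restrict]
    refine (ae_restrict_mem (measurableSet_Ioi.prod measurableSet_Ioi)).mono ?_
    rintro ⟨t, x⟩ ⟨ht, hx⟩
    have ht : 0 < t := ht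
    have hx : 0 < x := hx
    simp only [Function.uncurry]
    rw [norm_mul, aux_norm _ _ ht, Complex.norm_real, Real.norm_eq_abs, abs_mul, abs_div,
      abs_of_pos (kern_pos hx), abs_two]
    have h1 : |Real.sin (t * x)| ≤ t * x := by
      have := Real.abs_sin_le_abs (x := t * x)
      rwa [abs_of_pos (mul_pos ht hx)] at this
    have hk := kern_pos hx
    have h2 : |Real.sin (t * x)| / (Real.exp (2 * π * x) - 1) ≤ t * Real.exp (-π * x) := by
      calc _ ≤ t * x / (Real.exp (2 * π * x) - 1) := by gcongr
        _ = t * (x / (Real.exp (2 * π * x) - 1)) := by ring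
        _ ≤ _ := by gcongr; exact kern_bound hx
    have h3 : t ^ (s.re + 1 - 1) = t ^ (s.re - 1) * t := by
      rw [← Real.rpow_add_one ht.ne']; congr 1; ring
    rw [h3]
    calc _ ≤ t ^ (s.re - 1) * Real.exp (-(a:ℂ).re * t) * (2 * (t * Real.exp (-π * x))) := by gcongr
      _ = _ := by simp; ring

lemma inner_int {a : ℝ} (ha : 0 < a) {s : ℂ} (hs : 1 < s.re) (x : ℝ) :
    ∫ t in Set.Ioi (0:ℝ), (t : ℂ) ^ (s - 1) * Complex.exp (-((a:ℂ) * t)) *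
      ((2 * (Real.sin (t * x) / (Real.exp (2 * π * x) - 1)) : ℝ) : ℂ) =
      Complex.Gamma s * (hQ a s x / ((Real.exp (2 * π * x) - 1 : ℝ) : ℂ)) := by
  have hs0 : 0 < s.re := by linarith
  have h1 := laplace_cpow s (a + x * Complex.I) hs0 (by simpa using ha)
  have h2 := laplace_cpow s (a - x * Complex.I) hs0 (by simpa using ha)
  have i1 := aux_int s (a + x * Complex.I) hs0 (by simpa using ha)
  have i2 := aux_int s (a - x * Complex.I) hs0 (by simpa using ha)
  have h3 := integral_sub i1 i2
  rw [h1, h2] at h3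
  have h4 : Complex.Gamma s * (hQ a s x / ((Real.exp (2 * π * x) - 1 : ℝ) : ℂ)) =
      (Complex.I / ((Real.exp (2 * π * x) - 1 : ℝ) : ℂ)) *
      ((a + x * Complex.I) ^ (-s) * Complex.Gamma s - (a - x * Complex.I) ^ (-s) * Complex.Gamma s) := by
    rw [hQ]; ring
  rw [h4, ← h3, ← integral_const_mul]
  refine integral_congr_ae (Eventually.of_forall fun t => ?_)
  simp only
  rw [show -((a + x * Complex.I) * (t:ℂ)) = -((a:ℂ) * t) + (-(t * x : ℂ)) * Complex.I by ring,
    show -((a - x * Complex.I) * (t:ℂ)) = -((a:ℂ) * t) + ((t * x : ℂ)) * Complex.I by ring,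
    Complex.exp_add, Complex.exp_add]
  push_cast
  rw [Complex.sin]
  ring

lemma hermite_one_lt {a : ℝ} (ha : 0 < a) {s : ℂ} (hs : 1 < s.re) :
    hurwitzZetaReal s a = (a : ℂ) ^ (-s) / 2 + (a : ℂ) ^ (1 - s) / (s - 1) +
      ∫ x in Set.Ioi (0:ℝ), hQ a s x / ((Real.exp (2 * π * x) - 1 : ℝ) : ℂ) := by
  have hs0 : 0 < s.re := by linarith
  have hG : Complex.Gamma s ≠ 0 := Complex.Gamma_ne_zero_of_re_pos hs0
  refine mul_left_cancel₀ hG ?_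
  rw [hz_mellin ha hs]
  have hs1 : s - 1 ≠ 0 := by intro h; have := congrArg Complex.re h; simp at this; linarith
  have hGs : Complex.Gamma s = (s - 1) * Complex.Gamma (s - 1) := by
    have := Complex.Gamma_add_one (s - 1) hs1
    simpa using this
  have h1 := laplace_cpow s a hs0 (by simpa using ha)
  have h2 := laplace_cpow (s - 1) a (by simp; linarith) (by simpa using ha)
  have i1 := aux_int s a hs0 (by simpa using ha)
  have i2 := aux_int (s - 1) a (by simp; linarith) (by simpa using ha)
  have hF := fub_int ha hs
  have i3 := hF.integral_prod_left
  have h3 := integral_integral_swap hF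
  simp only [Function.uncurry] at i3
  simp only [inner_int ha hs] at h3
  rw [integral_const_mul] at h3
  have h4 := integral_add ((i1.div_const 2).add i2) i3
  rw [h3] at h4
  have h5 := integral_add (i1.div_const 2) i2
  simp only [Pi.add_apply] at h4 h5
  rw [h5, integral_div, h1, h2] at h4
  have h6 : Complex.Gamma s * ((a : ℂ) ^ (-s) / 2 + (a : ℂ) ^ (1 - s) / (s - 1) +
      ∫ x in Set.Ioi (0:ℝ), hQ a s x / ((Real.exp (2 * π * x) - 1 : ℝ) : ℂ)) =
      (a:ℂ) ^ (-s) * Complex.Gamma s / 2 + (a:ℂ) ^ (-(s - 1)) * Complex.Gamma (s - 1) + 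
      Complex.Gamma s * ∫ x in Set.Ioi (0:ℝ), hQ a s x / ((Real.exp (2 * π * x) - 1 : ℝ) : ℂ) := by
    rw [mul_add, mul_add, neg_sub]
    congr 1
    congr 1
    · ring
    · rw [hGs]; field_simp
  rw [h6, ← h4]
  refine setIntegral_congr_fun measurableSet_Ioi fun t ht => ?_
  have ht : 0 < t := ht
  have htc : (t : ℂ) ≠ 0 := by exact_mod_cast ht.ne'
  rw [integral_const_mul, integral_complex_ofReal, integral_const_mul, legendre ht]
  rw [Complex.cpow_sub _ _ htc, Complex.cpow_sub (s - 1) _ htc, Complex.cpow_sub _ _ htc, Complex.cpow_one]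
  have h7 : Complex.exp (-((a:ℂ) * t)) = ((Real.exp (-a * t) : ℝ) : ℂ) := by push_cast; congr 1; ring
  rw [h7]
  have h8 : (1 : ℂ) - (Real.exp (-t) : ℂ) ≠ 0 := by
    have h6 : Real.exp (-t) < 1 := by rw [Real.exp_lt_one_iff]; linarith
    have : (1 - Real.exp (-t)) ≠ 0 := by linarith
    exact_mod_cast this
  generalize Real.exp (-t) = E at *
  generalize Real.exp (-a * t) = D at *
  push_cast at h8 ⊢
  field_simp
  ring

lemma hermite {a : ℝ} (ha : 0 < a) {s : ℂ} (hs : s ≠ 1) :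
    hurwitzZetaReal s a = (a : ℂ) ^ (-s) / 2 + (a : ℂ) ^ (1 - s) / (s - 1) +
      ∫ x in Set.Ioi (0:ℝ), hQ a s x / ((Real.exp (2 * π * x) - 1 : ℝ) : ℂ) := by
  have hac : (a : ℂ) ≠ 0 := by exact_mod_cast ha.ne'
  have hf : AnalyticOnNhd ℂ (fun s => hurwitzZetaReal s a) {1}ᶜ := by
    refine DifferentiableOn.analyticOnNhd (fun s hs => DifferentiableAt.differentiableWithinAt ?_) isOpen_compl_singleton
    unfold hurwitzZetaReal
    refine (HurwitzZeta.differentiableAt_hurwitzZeta _ hs).sub ?_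
    refine DifferentiableAt.fun_sum fun k _ => ?_
    refine DifferentiableAt.const_cpow (by fun_prop) (Or.inl ?_)
    have := Nat.ceil_lt_add_one ha.le
    have : 0 < a - ((⌈a⌉₊ : ℝ) - 1) + k := by have : (0:ℝ) ≤ k := by positivity
                                              linarith
    exact_mod_cast this.ne'
  have hg : AnalyticOnNhd ℂ (fun s => (a : ℂ) ^ (-s) / 2 + (a : ℂ) ^ (1 - s) / (s - 1) +
      ∫ x in Set.Ioi (0:ℝ), hQ a s x / ((Real.exp (2 * π * x) - 1 : ℝ) : ℂ)) {1}ᶜ := by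
    refine DifferentiableOn.analyticOnNhd (fun s hs => DifferentiableAt.differentiableWithinAt ?_) isOpen_compl_singleton
    refine DifferentiableAt.add (DifferentiableAt.add ?_ ?_) (hI_deriv ha s).2.differentiableAt
    · exact (DifferentiableAt.const_cpow (by fun_prop) (Or.inl hac)).div_const _
    · exact (DifferentiableAt.const_cpow (by fun_prop) (Or.inl hac)).div (by fun_prop) (sub_ne_zero.2 hs)
  have hU : IsPreconnected ({1}ᶜ : Set ℂ) := (isConnected_compl_singleton_of_one_lt_rank (by simp) 1).isPreconnected
  refine hf.eqOn_of_preconnected_of_eventuallyEq hg hU (z₀ := 2) (by simp) ?_ hs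
  have : {s : ℂ | 1 < s.re} ∈ nhds (2:ℂ) :=
    (isOpen_lt continuous_const Complex.continuous_re).mem_nhds (by simp)
  filter_upwards [this] with s hs
  exact hermite_one_lt ha hs

lemma log_polar {a : ℝ} (ha : 0 < a) (x : ℝ) :
    Complex.log (a + x * Complex.I) = ((Real.log (x ^ 2 + a ^ 2) / 2 : ℝ) : ℂ) + (Real.arctan (x / a) : ℂ) * Complex.I := by
  have h1 : Complex.arg (a + x * Complex.I) = Real.arctan (x / a) := by
    have h2 := Complex.tan_arg (a + x * Complex.I)
    have h3 : |Complex.arg (a + x * Complex.I)| < π / 2 :=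
      Complex.abs_arg_lt_pi_div_two_iff.2 (Or.inl (by simpa using ha))
    rw [abs_lt] at h3
    have h4 := Real.arctan_tan h3.1 h3.2
    rw [← h4, h2]; simp
  rw [Complex.log, h1, Complex.norm_add_mul_I, Real.log_sqrt (by positivity), add_comm (a ^ 2)]

lemma log_polar' {a : ℝ} (ha : 0 < a) (x : ℝ) :
    Complex.log (a - x * Complex.I) = ((Real.log (x ^ 2 + a ^ 2) / 2 : ℝ) : ℂ) - (Real.arctan (x / a) : ℂ) * Complex.I := by
  have := log_polar ha (-x)
  simp only [Complex.ofReal_neg, neg_mul, ← sub_eq_add_neg, neg_div, Real.arctan_neg, neg_sq] at this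
  rw [this]

lemma hQ'_zero {a : ℝ} (ha : 0 < a) (x : ℝ) : hQ' a 0 x = ((2 * Real.arctan (x / a) : ℝ) : ℂ) := by
  rw [hQ', log_polar ha, log_polar' ha]
  simp only [neg_zero, Complex.cpow_zero]
  push_cast
  ring_nf; rw [Complex.I_sq]; ring

lemma hQ'_neg_one {a : ℝ} (ha : 0 < a) (x : ℝ) : hQ' a (-1) x =
    ((a * (2 * Real.arctan (x / a)) + x * Real.log (x ^ 2 + a ^ 2) : ℝ) : ℂ) := by
  rw [hQ', log_polar ha, log_polar' ha]
  simp only [neg_neg, Complex.cpow_one]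
  push_cast
  ring_nf; rw [Complex.I_sq]; ring

lemma hz_deriv {a : ℝ} (ha : 0 < a) {s : ℂ} (hs : s ≠ 1) :
    deriv (fun s => hurwitzZetaReal s a) s = -(Real.log a * (a : ℂ) ^ (-s)) / 2 +
      (-(Real.log a * (a : ℂ) ^ (1 - s)) * (s - 1) - (a : ℂ) ^ (1 - s)) / (s - 1) ^ 2 +
      ∫ x in Set.Ioi (0:ℝ), hQ' a s x / ((Real.exp (2 * π * x) - 1 : ℝ) : ℂ) := by
  have hac : (a : ℂ) ≠ 0 := by exact_mod_cast ha.ne'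
  have he : (fun s => hurwitzZetaReal s a) =ᶠ[nhds s] (fun s => (a : ℂ) ^ (-s) / 2 + (a : ℂ) ^ (1 - s) / (s - 1) +
      ∫ x in Set.Ioi (0:ℝ), hQ a s x / ((Real.exp (2 * π * x) - 1 : ℝ) : ℂ)) := by
    filter_upwards [isOpen_compl_singleton.mem_nhds hs] with v hv
    exact hermite ha hv
  rw [he.deriv_eq]
  have h1 := ((hasDerivAt_id s).fun_neg.const_cpow (c := (a : ℂ)) (Or.inl hac)).div_const 2
  have h2 := (((hasDerivAt_id s).const_sub 1).const_cpow (c := (a : ℂ)) (Or.inl hac)).fun_div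
    ((hasDerivAt_id s).sub_const 1) (sub_ne_zero.2 hs)
  have h3 := (h1.fun_add h2).fun_add (hI_deriv ha s).2
  simp only [id] at h3
  rw [h3.deriv, Complex.ofReal_log ha.le]
  ring

noncomputable def binJ (a : ℝ) : ℝ :=
  ∫ x in Set.Ioi (0:ℝ), 2 * Real.arctan (x / a) / (Real.exp (2 * π * x) - 1)

lemma binJ_int {a : ℝ} (ha : 0 < a) :
    IntegrableOn (fun x : ℝ => 2 * Real.arctan (x / a) / (Real.exp (2 * π * x) - 1)) (Set.Ioi 0) := by
  have h := (hI_deriv ha 0).1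
  simp only [hQ'_zero ha, ← Complex.ofReal_div] at h
  have := h.re
  simp only [RCLike.re_to_complex, Complex.ofReal_re] at this
  exact this

noncomputable def binB (a : ℝ) : ℝ := (a - 1 / 2) * Real.log a - a + binJ a

lemma hz_deriv_zero {a : ℝ} (ha : 0 < a) :
    deriv (fun s => hurwitzZetaReal s a) 0 = (binB a : ℂ) := by
  rw [hz_deriv ha (by norm_num)]
  simp only [hQ'_zero ha, ← Complex.ofReal_div]
  rw [integral_complex_ofReal, binB, binJ]
  simp
  ring

lemma hz_deriv_neg_one {a : ℝ} (ha : 0 < a) :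
    deriv (fun s => hurwitzZetaReal s a) (-1) = ((-(a * Real.log a) / 2 + (a ^ 2 / 2 * Real.log a - a ^ 2 / 4)
      + (a * binJ a + ∫ x in Set.Ioi (0:ℝ), x * Real.log (x ^ 2 + a ^ 2) / (Real.exp (2 * π * x) - 1)) : ℝ) : ℂ) := by
  have h := (hI_deriv ha (-1)).1
  rw [hz_deriv ha (by norm_num)]
  simp only [hQ'_neg_one ha, ← Complex.ofReal_div] at h ⊢
  have h := h.re
  simp only [RCLike.re_to_complex, Complex.ofReal_re] at h
  have hJ := (binJ_int ha).const_mul a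
  have hK := h.sub hJ
  have h2 := integral_add hJ hK
  have e1 : ∫ x in Set.Ioi (0:ℝ), (a * (2 * Real.arctan (x / a)) + x * Real.log (x ^ 2 + a ^ 2)) / (Real.exp (2 * π * x) - 1)
     = a * binJ a + ∫ x in Set.Ioi (0:ℝ), x * Real.log (x ^ 2 + a ^ 2) / (Real.exp (2 * π * x) - 1) := by
    rw [binJ, ← integral_const_mul]
    convert! h2 using 1
    · congr 1; ext x; simp
    · congr 2; ext x; simp; ring
  rw [integral_complex_ofReal, e1]
  have : (1:ℂ) - -1 = ((2:ℕ):ℂ) := by norm_num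
  rw [this, Complex.cpow_natCast]
  simp
  ring

lemma hz_shift {a : ℝ} (ha : 0 < a) (s : ℂ) :
    hurwitzZetaReal s (a + 1) = hurwitzZetaReal s a - (a : ℂ) ^ (-s) := by
  obtain ⟨m, hm⟩ : ∃ m, ⌈a⌉₊ = m + 1 := Nat.exists_eq_succ_of_ne_zero (Nat.ceil_pos.2 ha).ne'
  unfold hurwitzZetaReal
  rw [Nat.ceil_add_one ha.le, hm, Nat.add_sub_cancel, Nat.add_sub_cancel, Finset.sum_range_succ,
    AddCircle.coe_add_period]
  have : ∀ k : ℕ, a + 1 - (((m + 1 + 1 : ℕ) : ℝ) - 1) + k = a - (((m + 1 : ℕ) : ℝ) - 1) + k := by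
    intro k; push_cast; ring
  simp only [this]
  have h2 : a - (((m + 1 : ℕ) : ℝ) - 1) + m = a := by push_cast; ring
  rw [h2]; ring

lemma hz_one (s : ℂ) : hurwitzZetaReal s 1 = riemannZeta s := by
  unfold hurwitzZetaReal
  have : ((1 : ℝ) : UnitAddCircle) = 0 := AddCircle.coe_period 1
  rw [this, HurwitzZeta.hurwitzZeta_zero]
  simp

lemma zeta_deriv_zero : deriv riemannZeta 0 = (binB 1 : ℂ) := by
  rw [← hz_deriv_zero one_pos]
  congr 1
  ext s; exact (hz_one s).symm

lemma binB_shift {a : ℝ} (ha : 0 < a) : binB (a + 1) = binB a + Real.log a := by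
  have h1 := hz_deriv_zero (a := a + 1) (by linarith)
  have hac : (a : ℂ) ≠ 0 := by exact_mod_cast ha.ne'
  simp only [hz_shift ha] at h1
  have h2 : DifferentiableAt ℂ (fun s => hurwitzZetaReal s a) 0 := by
    have he : (fun s => hurwitzZetaReal s a) =ᶠ[nhds 0] (fun s => (a : ℂ) ^ (-s) / 2 + (a : ℂ) ^ (1 - s) / (s - 1) +
      ∫ x in Set.Ioi (0:ℝ), hQ a s x / ((Real.exp (2 * π * x) - 1 : ℝ) : ℂ)) := by
      filter_upwards [isOpen_compl_singleton.mem_nhds (by simp : (0:ℂ) ∈ ({1}ᶜ : Set ℂ))] with v hv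
      exact hermite ha hv
    refine DifferentiableAt.congr_of_eventuallyEq ?_ he
    refine DifferentiableAt.add (DifferentiableAt.add ?_ ?_) (hI_deriv ha 0).2.differentiableAt
    · exact (DifferentiableAt.const_cpow (by fun_prop) (Or.inl hac)).div_const _
    · exact (DifferentiableAt.const_cpow (by fun_prop) (Or.inl hac)).div (by fun_prop) (by simp)
  have h3 := (hasDerivAt_id (0:ℂ)).fun_neg.const_cpow (c := (a : ℂ)) (Or.inl hac)
  simp only [id] at h3
  rw [deriv_fun_sub h2 h3.differentiableAt, h3.deriv, hz_deriv_zero ha] at h1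
  simp only [neg_zero, Complex.cpow_zero, one_mul, mul_neg, mul_one, sub_neg_eq_add, ← Complex.ofReal_log ha.le] at h1
  exact_mod_cast h1.symm

lemma arctan_convex {x : ℝ} (hx : 0 < x) : ConvexOn ℝ (Set.Ioi 0) (fun a : ℝ => Real.arctan (x / a)) := by
  have hd : ∀ a : ℝ, 0 < a → HasDerivAt (fun a : ℝ => Real.arctan (x / a)) (-x / (x ^ 2 + a ^ 2)) a := by
    intro a ha
    have h1 := ((hasDerivAt_inv ha.ne').const_mul x).arctan
    simp only [← div_eq_mul_inv] at h1
    refine h1.congr_deriv ?_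
    field_simp
    ring
  refine MonotoneOn.convexOn_of_deriv (convex_Ioi 0) ?_ ?_ ?_
  · exact fun a ha => (hd a ha).continuousAt.continuousWithinAt
  · rw [interior_Ioi]
    exact fun a ha => (hd a ha).differentiableAt.differentiableWithinAt
  · rw [interior_Ioi]
    intro a ha b hb hab
    have ha : 0 < a := ha
    rw [(hd a ha).deriv, (hd b hb).deriv, neg_div, neg_div]
    gcongr

lemma binJ_convex : ConvexOn ℝ (Set.Ioi 0) binJ := by
  refine ⟨convex_Ioi 0, fun a ha b hb p q hp hq hpq => ?_⟩
  have hab : p • a + q • b ∈ Set.Ioi (0:ℝ) := (convex_Ioi 0) ha hb hp hq hpq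
  unfold binJ
  simp only [smul_eq_mul] at hab ⊢
  rw [← integral_const_mul, ← integral_const_mul,
    ← integral_add ((binJ_int ha).const_mul p) ((binJ_int hb).const_mul q)]
  refine setIntegral_mono_on (binJ_int hab) (((binJ_int ha).const_mul p).add ((binJ_int hb).const_mul q)) measurableSet_Ioi ?_
  intro x hx
  have h := (arctan_convex hx).2 ha hb hp hq hpq
  have hk := kern_pos hx
  simp only [smul_eq_mul] at h ⊢
  calc _ ≤ 2 * (p * Real.arctan (x / a) + q * Real.arctan (x / b)) / (Real.exp (2 * π * x) - 1) := by gcongr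
    _ = _ := by ring

lemma elem_convex : ConvexOn ℝ (Set.Ioi 0) (fun a : ℝ => (a - 1 / 2) * Real.log a - a) := by
  have hd : ∀ a : ℝ, 0 < a → HasDerivAt (fun a : ℝ => (a - 1 / 2) * Real.log a - a) (Real.log a - 1 / (2 * a)) a := by
    intro a ha
    have h1 := (((hasDerivAt_id a).sub_const (1/2)).mul (Real.hasDerivAt_log ha.ne')).sub (hasDerivAt_id a)
    refine h1.congr_deriv ?_
    simp only [id]
    field_simp
    ring
  refine MonotoneOn.convexOn_of_deriv (convex_Ioi 0) ?_ ?_ ?_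
  · exact fun a ha => (hd a ha).continuousAt.continuousWithinAt
  · rw [interior_Ioi]
    exact fun a ha => (hd a ha).differentiableAt.differentiableWithinAt
  · rw [interior_Ioi]
    intro a ha b hb hab
    have ha : 0 < a := ha
    rw [(hd a ha).deriv, (hd b hb).deriv]
    gcongr

lemma log_Gamma_eq {a : ℝ} (ha : 0 < a) : Real.log (Real.Gamma a) = binB a - binB 1 := by
  have h := Real.eq_Gamma_of_log_convex (f := fun a => Real.exp (binB a - binB 1)) ?_ ?_ ?_ ?_
  · rw [← h ha, Real.log_exp]
  · have : (Real.log ∘ fun a => Real.exp (binB a - binB 1)) =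
        fun a => ((fun a : ℝ => (a - 1 / 2) * Real.log a - a) + binJ) a + (-binB 1) := by
      ext a; simp [binB]; ring
    rw [this]
    exact (elem_convex.add binJ_convex).add_const _
  · intro y hy
    rw [binB_shift hy, show binB y + Real.log y - binB 1 = Real.log y + (binB y - binB 1) by ring,
      Real.exp_add, Real.exp_log hy]
  · intro y _; exact Real.exp_pos _
  · simp

/-- Hermite-type integral representation of log G(z+1) for z > 0. -/
theorem logBarnesG1p_eq_hermite_integral (z : ℝ) (hz : 0 < z) :
    logBarnesG1p z =
      ((z ^ 2 / 2 * (Real.log z - 3 / 2) : ℝ) : ℂ) - z * deriv riemannZeta 0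
        + deriv riemannZeta (-1)
        - ((∫ x in Set.Ioi (0 : ℝ),
            x * Real.log (x ^ 2 + z ^ 2) / (Real.exp (2 * π * x) - 1) : ℝ) : ℂ) := by
  rw [logBarnesG1p, hurwitzZetaDerivNegOne, hz_deriv_neg_one hz, log_Gamma_eq hz, zeta_deriv_zero, binB]
  push_cast
  ring
end

section
/- The integral ∫₀^∞ x·log(1 + x²)/(e^{2πx} + 1) dx equals 3/4 − (23/24)·log 2 + (1/2)·ζ'(−1), where ζ' is the derivative of the Riemann zeta function. -/
open Real MeasureTheory Filter

lemma eta_hasSum {s : ℂ} (hs : 1 < s.re) :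
    HasSum (fun n : ℕ => (-1 : ℂ) ^ n / ((n : ℂ) + 1) ^ s) ((1 - 2 * 2 ^ (-s)) * riemannZeta s) := by
  have hsum : Summable (fun n : ℕ => 1 / ((n : ℂ) + 1) ^ s) := by
    have := (summable_nat_add_iff 1).mpr (Complex.summable_one_div_nat_cpow.mpr hs)
    simpa using this
  have h1 : HasSum (fun n : ℕ => 1 / ((n : ℂ) + 1) ^ s) (riemannZeta s) := by
    rw [zeta_eq_tsum_one_div_nat_add_one_cpow hs]; exact hsum.hasSum
  have hodd : HasSum (fun k : ℕ => 1 / (((2 * k + 1 : ℕ) : ℂ) + 1) ^ s)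
      (2 ^ (-s) * riemannZeta s) := by
    convert! h1.mul_left ((2 : ℂ) ^ (-s)) using 2 with k
    have : (((2 * k + 1 : ℕ) : ℂ) + 1) = ((2 : ℝ) : ℂ) * ((k + 1 : ℝ) : ℂ) := by push_cast; ring
    rw [this, Complex.mul_cpow_ofReal_nonneg (by norm_num) (by positivity), Complex.cpow_neg]
    push_cast
    rw [one_div, mul_inv, one_div]
  have heven : Summable (fun k : ℕ => 1 / (((2 * k : ℕ) : ℂ) + 1) ^ s) :=
    hsum.comp_injective (i := fun k => 2 * k) (mul_right_injective₀ two_ne_zero)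
  have h2 := HasSum.even_add_odd (f := fun n : ℕ => 1 / ((n : ℂ) + 1) ^ s) heven.hasSum hodd
  have h3 := h2.unique h1
  have h4 := HasSum.even_add_odd (f := fun n : ℕ => (-1 : ℂ) ^ n / ((n : ℂ) + 1) ^ s)
    (m := ∑' k : ℕ, 1 / (((2 * k : ℕ) : ℂ) + 1) ^ s) (m' := - (2 ^ (-s) * riemannZeta s))
    (by convert! heven.hasSum using 2 with k; simp [pow_mul])
    (by convert! hodd.neg using 2 with k; simp [pow_succ, pow_mul, neg_div])
  convert! h4 using 1
  linear_combination -h3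

lemma mellin_p {s : ℂ} (hs : 1 < s.re) :
    mellin (fun t : ℝ => ((1 / (Real.exp (2 * π * t) + 1) : ℝ) : ℂ)) s =
      Complex.Gamma s * (2 * π) ^ (-s) * ((1 - 2 * 2 ^ (-s)) * riemannZeta s) := by
  have hs0 : 0 < s.re := by linarith
  have key := hasSum_mellin (a := fun n : ℕ => (-1 : ℂ) ^ n) (p := fun n : ℕ => 2 * π * (n + 1))
    (F := fun t : ℝ => ((1 / (Real.exp (2 * π * t) + 1) : ℝ) : ℂ)) (s := s)
    (fun i => Or.inr (by positivity)) hs0 ?_ ?_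
  · refine key.unique ?_
    convert! (eta_hasSum hs).mul_left (Complex.Gamma s * (2 * π) ^ (-s)) using 2 with n
    have : ((2 * π * (n + 1) : ℝ) : ℂ) = ((2 * π : ℝ) : ℂ) * ((n + 1 : ℝ) : ℂ) := by push_cast; ring
    rw [this, Complex.mul_cpow_ofReal_nonneg (by positivity) (by positivity), Complex.cpow_neg]
    push_cast
    simp only [div_eq_mul_inv, mul_inv]
    ring
  · intro t ht
    have ht : 0 < t := ht
    set q := Real.exp (-(2 * π * t)) with hq
    have hq1 : q < 1 := by rw [hq, Real.exp_lt_one_iff]; simp; positivity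
    have hq0 : 0 < q := Real.exp_pos _
    have h := (hasSum_geometric_of_abs_lt_one (r := -q) (by rw [abs_neg, abs_of_pos hq0]; exact hq1)).mul_left q
    have h' := Complex.hasSum_ofReal.mpr h
    convert! h' using 1
    · ext n
      have : Real.exp (-(2 * π * (n + 1)) * t) = q * q ^ n := by
        rw [hq, ← Real.exp_nat_mul, ← Real.exp_add]; congr 1; ring
      rw [this, neg_pow q]; push_cast; ring
    · congr 1
      have : Real.exp (2 * π * t) = q⁻¹ := by rw [hq, Real.exp_neg, inv_inv]
      rw [this, sub_neg_eq_add]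
      have : (1 + q) ≠ 0 := by positivity
      field_simp
  · have := (summable_nat_add_iff 1).mpr (Real.summable_one_div_nat_rpow.mpr hs)
    convert! this.mul_left ((2 * π) ^ (-s.re)) using 2 with n
    rw [Real.mul_rpow (by positivity) (by positivity), Real.rpow_neg (by positivity)]
    simp
    ring

lemma F0_aux : IntegrableOn (fun x : ℝ => x * Real.log x / (Real.exp (2 * π * x) + 1)) (Set.Ioi 0) ∧
    2 * ((∫ x in Set.Ioi (0 : ℝ), x * Real.log x / (Real.exp (2 * π * x) + 1) : ℝ) : ℂ) =
      Real.log 2 / 24 + (1 / 2) * deriv riemannZeta (-1) := by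
  set f : ℝ → ℂ := fun t : ℝ => ((1 / (Real.exp (2 * π * t) + 1) : ℝ) : ℂ) with hf
  have hcont : Continuous f := by
    apply Complex.continuous_ofReal.comp
    exact continuous_const.div (by fun_prop) (fun x => by positivity)
  have htop : f =O[atTop] (fun t : ℝ => t ^ (-(3 : ℝ))) := by
    have h1 : f =O[atTop] (fun t : ℝ => Real.exp (-(2 * π) * t)) := by
      refine Asymptotics.isBigO_of_le _ fun t => ?_
      simp only [hf, Complex.norm_real]
      rw [Real.norm_of_nonneg (by positivity), Real.norm_of_nonneg (by positivity), neg_mul,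
        Real.exp_neg, ← one_div]
      gcongr
      linarith
    exact h1.trans (isLittleO_exp_neg_mul_rpow_atTop (by positivity) _).isBigO
  have hbot : f =O[nhdsWithin 0 (Set.Ioi 0)] (fun t : ℝ => t ^ (-(0 : ℝ))) := by
    refine Asymptotics.isBigO_of_le _ fun t => ?_
    simp only [hf, Complex.norm_real]
    rw [Real.norm_of_nonneg (by positivity)]
    simp
    apply inv_le_one_of_one_le₀
    have := Real.exp_pos (2 * π * t)
    linarith
  have hm := mellin_hasDerivAt_of_isBigO_rpow (s := 2) (f := f)
    (hcont.locallyIntegrable.locallyIntegrableOn _) htop (by norm_num) hbot (by norm_num)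
  obtain ⟨hconv, hder⟩ := hm
  have hfun : ∀ x : ℝ, (x : ℂ) ^ ((2 : ℂ) - 1) • (Real.log x • f x) =
      ((x * Real.log x / (Real.exp (2 * π * x) + 1) : ℝ) : ℂ) := by
    intro x
    have : (2 : ℂ) - 1 = 1 := by norm_num
    rw [this, Complex.cpow_one]
    simp only [hf, smul_eq_mul, Complex.real_smul]
    push_cast
    ring
  constructor
  · unfold MellinConvergent at hconv
    simp only [hfun] at hconv
    exact_mod_cast hconv.re
  · have hval : mellin (fun t => Real.log t • f t) 2 =
      ((∫ x in Set.Ioi (0 : ℝ), x * Real.log x / (Real.exp (2 * π * x) + 1) : ℝ) : ℂ) := by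
      unfold mellin
      simp only [hfun]
      exact integral_ofReal
    rw [hval] at hder
    -- other side
    have heq : mellin f =ᶠ[nhds 2] fun s => (1 - 2 * 2 ^ (-s)) * riemannZeta (1 - s) /
        (2 * Complex.cos (π * s / 2)) := by
      have o1 : ∀ᶠ s : ℂ in nhds 2, 1 < s.re :=
        (isOpen_lt continuous_const Complex.continuous_re).mem_nhds (by simp)
      have o2 : ∀ᶠ s : ℂ in nhds 2, Complex.cos (π * s / 2) ≠ 0 := by
        have : Continuous fun s : ℂ => Complex.cos (π * s / 2) := by fun_prop
        refine this.continuousAt.eventually_ne ?_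
        have : (π : ℂ) * 2 / 2 = π := by ring
        rw [this]; simp
      filter_upwards [o1, o2] with s h1 h2
      rw [mellin_p h1, riemannZeta_one_sub]
      · field_simp
      · intro n hn; rw [hn] at h1; simp at h1; linarith [(Nat.cast_nonneg n : (0:ℝ) ≤ n)]
      · intro hn; rw [hn] at h1; simp at h1
    have hz : HasDerivAt (fun s : ℂ => riemannZeta (1 - s)) (-(deriv riemannZeta (-1))) 2 := by
      have h1 : HasDerivAt riemannZeta (deriv riemannZeta (-1)) ((1 : ℂ) - 2) := by
        have : (1 : ℂ) - 2 = -1 := by norm_num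
        rw [this]
        exact (differentiableAt_riemannZeta (by norm_num)).hasDerivAt
      have := h1.comp (2 : ℂ) ((hasDerivAt_id (2 : ℂ)).const_sub 1)
      convert! this using 1
      simp
    have hp : HasDerivAt (fun s : ℂ => (1 - 2 * 2 ^ (-s) : ℂ)) (2 * (2 ^ (-2 : ℂ) * Complex.log 2)) 2 := by
      have := (((hasDerivAt_id (2 : ℂ)).neg.const_cpow (c := 2) (Or.inl (by norm_num))).const_mul 2).const_sub 1
      convert! this using 1
      simp
    have hc : HasDerivAt (fun s : ℂ => 2 * Complex.cos (π * s / 2)) 0 2 := by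
      have := ((((hasDerivAt_id (2 : ℂ)).const_mul (π : ℂ)).div_const 2).ccos).const_mul 2
      convert! this using 1
      have : (π : ℂ) * 2 / 2 = π := by ring
      simp [this]
    have hcv : (π : ℂ) * 2 / 2 = π := by ring
    have hd := (hp.mul hz).div hc (by rw [hcv]; simp)
    have hu := (hder.congr_of_eventuallyEq heq.symm).unique hd
    have hzm : riemannZeta (-1) = -1 / 12 := by
      have := riemannZeta_neg_nat_eq_bernoulli 1
      simp at this
      rw [this]; norm_num [bernoulli_two]
    have h12 : (1 : ℂ) - 2 = -1 := by norm_num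
    have h24 : (2 : ℂ) ^ (-2 : ℂ) = 1 / 4 := by
      rw [Complex.cpow_neg]; norm_num
    simp only [hcv, h12, hzm, h24, Complex.cos_pi] at hu
    have : Complex.log 2 = (Real.log 2 : ℝ) := by
      rw [Complex.ofReal_log (by norm_num)]; norm_num
    rw [hu, this]
    ring


noncomputable def KK (b : ℝ) : ℝ := 1 - b * Real.log (1 + b) + b * Real.log b

lemma KK_cont (N : ℝ) : ContinuousOn KK (Set.Icc 0 N) := by
  unfold KK
  have h1 : ContinuousOn (fun b : ℝ => Real.log (1 + b)) (Set.Icc 0 N) := by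
    apply ContinuousOn.log (by fun_prop)
    intro x hx; have := hx.1; positivity
  have h2 : ContinuousOn (fun b : ℝ => b * Real.log b) (Set.Icc 0 N) :=
    Real.continuous_mul_log.continuousOn
  fun_prop

lemma KK_integral (N : ℝ) (hN : 0 ≤ N) : ∫ b in (0:ℝ)..N, KK b =
    N / 2 + N ^ 2 / 2 * Real.log N - (N ^ 2 - 1) / 2 * Real.log (1 + N) := by
  have hc : ContinuousOn (fun b : ℝ => b / 2 + b / 2 * (b * Real.log b) - (b ^ 2 - 1) / 2 * Real.log (1 + b))
      (Set.Icc 0 N) := by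
    have h1 : ContinuousOn (fun b : ℝ => Real.log (1 + b)) (Set.Icc 0 N) := by
      apply ContinuousOn.log (by fun_prop)
      intro x hx; have := hx.1; positivity
    have h2 : ContinuousOn (fun b : ℝ => b * Real.log b) (Set.Icc 0 N) :=
      Real.continuous_mul_log.continuousOn
    fun_prop
  rw [intervalIntegral.integral_eq_sub_of_hasDerivAt_of_le hN hc (f' := KK)]
  · simp; ring
  · intro x hx
    have hx0 : 0 < x := hx.1
    have h1 : HasDerivAt (fun b : ℝ => b * Real.log b) (Real.log x + 1) x :=
      Real.hasDerivAt_mul_log hx0.ne'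
    have h2 : HasDerivAt (fun b : ℝ => Real.log (1 + b)) (1 / (1 + x)) x :=
      ((hasDerivAt_id x).const_add 1).log (by simp; positivity)
    have h3 : HasDerivAt (fun b : ℝ => (b ^ 2 - 1) / 2) x x := by
      have := (((hasDerivAt_id x).pow 2).sub_const 1).div_const 2
      convert! this using 1; simp
    have h4 : HasDerivAt (fun b : ℝ => b / 2) (1 / 2) x := (hasDerivAt_id x).div_const 2
    have := (h4.add (h4.mul h1)).sub (h3.mul h2)
    convert! this using 1
    unfold KK
    field_simp
    ring
  · apply ContinuousOn.intervalIntegrable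
    rw [Set.uIcc_of_le hN]; exact KK_cont N

lemma KK_sum (N : ℕ) : ∑ n ∈ Finset.range N, KK (n + 1 / 2) =
    N - (N - 1 / 2) * Real.log (N + 1 / 2) + Real.log 2 / 2 +
      (Real.log (2 * N).factorial - N * Real.log 4 - Real.log N.factorial) := by
  induction N with
  | zero => simp [Real.log_inv]; ring
  | succ N ih =>
    rw [Finset.sum_range_succ, ih]
    have h1 : Real.log (2 * (N + 1)).factorial = Real.log (2 * N).factorial +
        Real.log (N + 1 / 2) + Real.log 4 + Real.log (N + 1) := by
      have : ((2 * (N + 1)).factorial : ℝ) = (2 * N).factorial * (N + 1 / 2) * 4 * (N + 1) := by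
        rw [show 2 * (N + 1) = (2 * N + 1) + 1 by ring, Nat.factorial_succ, Nat.factorial_succ]
        push_cast; ring
      rw [this, Real.log_mul (by positivity) (by positivity), Real.log_mul (by positivity) (by positivity),
        Real.log_mul (by positivity) (by positivity)]
    have h2 : Real.log (N + 1).factorial = Real.log N.factorial + Real.log (N + 1) := by
      rw [Nat.factorial_succ]; push_cast
      rw [Real.log_mul (by positivity) (by positivity)]; ring
    rw [h1, h2]
    unfold KK
    have : (1 + ((N : ℝ) + 1 / 2)) = N + 1 + 1 / 2 := by ring
    rw [this]
    push_cast
    ring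

lemma KK_lim : Tendsto (fun N : ℕ => (∫ b in (0:ℝ)..N, KK b) - ∑ n ∈ Finset.range N, KK (n + 1 / 2))
    atTop (nhds (3 / 4 - Real.log 2)) := by
  -- Stirling
  have hst : Tendsto (fun N : ℕ => Real.log (Stirling.stirlingSeq (2 * N)) -
      Real.log (Stirling.stirlingSeq N)) atTop (nhds 0) := by
    have h := (Stirling.tendsto_stirlingSeq_sqrt_pi).log (by positivity)
    have h2 := h.comp (tendsto_id.const_mul_atTop' (r := 2) (by norm_num))
    simpa using h2.sub h
  have hinv : Tendsto (fun N : ℕ => ((N : ℝ))⁻¹) atTop (nhds 0) :=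
    tendsto_inv_atTop_zero.comp tendsto_natCast_atTop_atTop
  have hb : ∀ᶠ N : ℕ in atTop, 2 ≤ N := eventually_ge_atTop 2
  have l1 : Tendsto (fun N : ℕ => (N : ℝ) / 2 - (N : ℝ) ^ 2 / 2 * Real.log (1 + (N : ℝ)⁻¹)) atTop
      (nhds (1 / 4)) := by
    rw [tendsto_iff_norm_sub_tendsto_zero]
    refine squeeze_zero' (Eventually.of_forall fun _ => norm_nonneg _) ?_ hinv
    filter_upwards [hb] with N hN
    have hN' : (2 : ℝ) ≤ N := by exact_mod_cast hN
    have hi : (N : ℝ)⁻¹ ≤ 1 / 2 := by rw [one_div]; gcongr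
    have hi0 : 0 < (N : ℝ)⁻¹ := by positivity
    have := Real.abs_log_sub_add_sum_range_le (x := -(N : ℝ)⁻¹) (by rw [abs_neg, abs_of_pos hi0]; linarith) 2
    rw [abs_neg, abs_of_pos hi0] at this
    simp only [Finset.sum_range_succ, Finset.sum_range_zero] at this
    norm_num at this
    have h3 : ‖(N : ℝ) / 2 - (N : ℝ) ^ 2 / 2 * Real.log (1 + (N : ℝ)⁻¹) - 1 / 4‖ =
        (N : ℝ) ^ 2 / 2 * |-(N : ℝ)⁻¹ + ((N : ℝ) ^ 2)⁻¹ / 2 + Real.log (1 + (N : ℝ)⁻¹)| := by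
      rw [Real.norm_eq_abs, ← abs_neg, ← abs_of_nonneg (by positivity : 0 ≤ (N : ℝ) ^ 2 / 2), ← abs_mul,
        abs_of_nonneg (by positivity : 0 ≤ (N : ℝ) ^ 2 / 2)]
      congr 1
      field_simp
      ring
    rw [h3]
    calc _ ≤ (N : ℝ) ^ 2 / 2 * (((N : ℝ) ^ 3)⁻¹ / (1 - (N : ℝ)⁻¹)) := by gcongr
      _ ≤ (N : ℝ) ^ 2 / 2 * (((N : ℝ) ^ 3)⁻¹ / (1 / 2)) := by gcongr; linarith
      _ = _ := by field_simp
  have l2 : Tendsto (fun N : ℕ => Real.log (1 + (N : ℝ)⁻¹) / 2 - Real.log (1 + (N : ℝ)⁻¹ / 2) / 2) atTop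
      (nhds 0) := by
    have a := ((hinv.const_add 1).log (by norm_num)).div_const 2
    have b := (((hinv.div_const 2).const_add 1).log (by norm_num)).div_const 2
    simpa using a.sub b
  have l3 : Tendsto (fun N : ℕ => (N : ℝ) * Real.log (1 + (N : ℝ)⁻¹ / 2)) atTop (nhds (1 / 2)) := by
    have h := (Real.tendsto_mul_log_one_add_of_tendsto (g := fun x => x⁻¹ / 2) (t := 1 / 2) ?_).comp
      tendsto_natCast_atTop_atTop
    · exact h
    · refine Tendsto.congr' ?_ tendsto_const_nhds
      filter_upwards [eventually_gt_atTop 0] with x hx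
      field_simp
  have := ((l1.add l2).add l3).sub_const (Real.log 2) |>.sub hst
  convert! this.congr' ?_ using 1
  · congr 1; ring
  · filter_upwards [hb] with N hN
    have hN' : (0 : ℝ) < N := by have : (2 : ℝ) ≤ N := by exact_mod_cast hN
                                 linarith
    rw [KK_integral _ hN'.le, KK_sum, Stirling.log_stirlingSeq_formula, Stirling.log_stirlingSeq_formula]
    have e1 : Real.log (1 + (N : ℝ)) = Real.log N + Real.log (1 + (N : ℝ)⁻¹) := by
      rw [← Real.log_mul (by positivity) (by positivity)]; congr 1; field_simp; ring
    have e2 : Real.log ((N : ℝ) + 1 / 2) = Real.log N + Real.log (1 + (N : ℝ)⁻¹ / 2) := by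
      rw [← Real.log_mul (by positivity) (by positivity)]; congr 1; field_simp
    have e4 : Real.log 4 = 2 * Real.log 2 := by
      rw [show (4 : ℝ) = 2 ^ 2 by norm_num, Real.log_pow]; norm_num
    rw [e1, e2, e4]
    push_cast
    rw [Real.log_div (by positivity) (by positivity), Real.log_div (by positivity) (by positivity),
      Real.log_mul (by positivity) (by positivity), Real.log_mul (by positivity) (by positivity), Real.log_exp]
    ring

lemma intA (b c : ℝ) (hb : 0 ≤ b) (hc : 0 < c) (hbc : c ≠ b) :
    IntegrableOn (fun x : ℝ => 2 * c * x ^ 2 / ((x ^ 2 + b ^ 2) * (x ^ 2 + c ^ 2))) (Set.Ioi 0) ∧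
    ∫ x in Set.Ioi (0:ℝ), 2 * c * x ^ 2 / ((x ^ 2 + b ^ 2) * (x ^ 2 + c ^ 2)) = π * (c / (b + c)) := by
  have hne : b ^ 2 - c ^ 2 ≠ 0 := by
    rw [sq_sub_sq]
    exact mul_ne_zero (by positivity) (sub_ne_zero.mpr hbc.symm)
  set g : ℝ → ℝ := fun x => 2 * c / (b ^ 2 - c ^ 2) * (b * arctan (x / b) - c * arctan (x / c)) with hg
  have hat : ∀ d : ℝ, 0 ≤ d → ∀ x : ℝ, 0 < x → HasDerivAt (fun x => d * arctan (x / d)) (d ^ 2 / (x ^ 2 + d ^ 2)) x := by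
    intro d hd x hx
    rcases hd.eq_or_lt with rfl | hd
    · simpa using hasDerivAt_const x (0:ℝ)
    · have := (((hasDerivAt_id x).div_const d).arctan).const_mul d
      convert! this using 1
      simp only [id]
      field_simp
      ring
  have hlim : ∀ d : ℝ, 0 ≤ d → Tendsto (fun x => d * arctan (x / d)) atTop (nhds (d * (π / 2))) := by
    intro d hd
    rcases hd.eq_or_lt with rfl | hd
    · simp
    · exact ((tendsto_nhds_of_tendsto_nhdsWithin tendsto_arctan_atTop).comp
        (tendsto_id.atTop_div_const hd)).const_mul d
  have hcont : ContinuousWithinAt g (Set.Ici 0) 0 := by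
    have : Continuous g := by fun_prop
    exact this.continuousWithinAt
  have hder : ∀ x ∈ Set.Ioi (0:ℝ), HasDerivAt g (2 * c * x ^ 2 / ((x ^ 2 + b ^ 2) * (x ^ 2 + c ^ 2))) x := by
    intro x hx
    have hx : 0 < x := hx
    have := ((hat b hb x hx).sub (hat c hc.le x hx)).const_mul (2 * c / (b ^ 2 - c ^ 2))
    convert! this using 1
    field_simp
    ring
  have hpos : ∀ x ∈ Set.Ioi (0:ℝ), 0 ≤ 2 * c * x ^ 2 / ((x ^ 2 + b ^ 2) * (x ^ 2 + c ^ 2)) := by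
    intro x hx; positivity
  have hl := ((hlim b hb).sub (hlim c hc.le)).const_mul (2 * c / (b ^ 2 - c ^ 2))
  refine ⟨integrableOn_Ioi_deriv_of_nonneg hcont hder hpos hl, ?_⟩
  rw [integral_Ioi_of_hasDerivAt_of_nonneg hcont hder hpos hl]
  simp only [hg]
  simp
  have : b + c ≠ 0 := by positivity
  field_simp
  ring

lemma fub (f : ℝ → ℝ → ℝ) (K : ℝ → ℝ) (B : ℝ) (hB : 0 ≤ B) (hm : Measurable (Function.uncurry f))
    (hpos : ∀ b ∈ Set.Ioc 0 B, ∀ x ∈ Set.Ioi (0:ℝ), 0 ≤ f b x)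
    (h : ∀ᵐ b ∂(volume.restrict (Set.Ioc 0 B)), IntegrableOn (f b) (Set.Ioi 0) ∧
      ∫ x in Set.Ioi (0:ℝ), f b x = K b) (hK : IntegrableOn K (Set.Ioc 0 B)) :
    IntegrableOn (fun x => ∫ b in (0:ℝ)..B, f b x) (Set.Ioi 0) ∧
    ∫ x in Set.Ioi (0:ℝ), ∫ b in (0:ℝ)..B, f b x = ∫ b in (0:ℝ)..B, K b := by
  have hint : Integrable (Function.uncurry f)
      ((volume.restrict (Set.Ioc 0 B)).prod (volume.restrict (Set.Ioi (0:ℝ)))) := by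
    rw [integrable_prod_iff hm.aestronglyMeasurable]
    refine ⟨h.mono fun b hb => hb.1, ?_⟩
    refine Integrable.congr hK ?_
    filter_upwards [h, ae_restrict_mem measurableSet_Ioc] with b hb hb'
    rw [← hb.2]
    refine setIntegral_congr_fun measurableSet_Ioi fun x hx => ?_
    exact (Real.norm_of_nonneg (hpos b hb' x hx)).symm
  simp only [intervalIntegral.integral_of_le hB]
  refine ⟨hint.integral_prod_right, ?_⟩
  rw [← integral_integral_swap hint]
  exact integral_congr_ae (h.mono fun b hb => hb.2)

lemma log_eq (x : ℝ) (hx : 0 < x) : Real.log (1 + 1 / x ^ 2) = ∫ c in (0:ℝ)..1, 2 * c / (x ^ 2 + c ^ 2) := by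
  rw [intervalIntegral.integral_eq_sub_of_hasDerivAt (f := fun c => Real.log (x ^ 2 + c ^ 2))]
  · rw [← Real.log_div (by positivity) (by positivity)]
    congr 1
    simp
    field_simp
  · intro c _
    have := (((hasDerivAt_id c).pow 2).const_add (x ^ 2)).log (by simp; positivity)
    convert! this using 1
    simp
  · apply Continuous.intervalIntegrable
    exact Continuous.div (by fun_prop) (by fun_prop) (fun c => by positivity)

noncomputable def ww (x : ℝ) : ℝ := x * Real.log (1 + 1 / x ^ 2)

lemma ww_meas : Measurable ww := by unfold ww; fun_prop

lemma ww_nonneg (x : ℝ) (hx : 0 ≤ x) : 0 ≤ ww x := by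
  unfold ww
  apply mul_nonneg hx (Real.log_nonneg _)
  have : 0 ≤ 1 / x ^ 2 := by positivity
  linarith

lemma intC (b : ℝ) (hb : 0 ≤ b) :
    IntegrableOn (fun x : ℝ => ww x * (x / (x ^ 2 + b ^ 2))) (Set.Ioi 0) ∧
    ∫ x in Set.Ioi (0:ℝ), ww x * (x / (x ^ 2 + b ^ 2)) = ∫ c in (0:ℝ)..1, π * (c / (b + c)) := by
  have h := fub (fun c x => 2 * c * x ^ 2 / ((x ^ 2 + b ^ 2) * (x ^ 2 + c ^ 2)))
    (fun c => π * (c / (b + c))) 1 zero_le_one (by unfold Function.uncurry; fun_prop)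
    (by intro c hc x hx; have := hc.1; positivity)
    (by
      have : ∀ᵐ c : ℝ, c ≠ b := by simp [ae_iff]
      filter_upwards [ae_restrict_of_ae this, ae_restrict_mem measurableSet_Ioc] with c hc hc'
      exact intA b c hb hc'.1 hc)
    (by
      refine Measure.integrableOn_of_bounded (M := π) (by simp)
        (by have : Measurable (fun c : ℝ => π * (c / (b + c))) := by fun_prop
            exact this.aestronglyMeasurable) ?_
      filter_upwards [ae_restrict_mem measurableSet_Ioc] with c hc
      have := hc.1
      rw [Real.norm_of_nonneg (by positivity)]
      have : c / (b + c) ≤ 1 := by rw [div_le_one (by positivity)]; linarith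
      nlinarith [pi_pos])
  have he : Set.EqOn (fun x => ∫ c in (0:ℝ)..1, 2 * c * x ^ 2 / ((x ^ 2 + b ^ 2) * (x ^ 2 + c ^ 2)))
      (fun x : ℝ => ww x * (x / (x ^ 2 + b ^ 2))) (Set.Ioi 0) := by
    intro x hx
    have hx : 0 < x := hx
    simp only [ww]
    rw [log_eq x hx, ← intervalIntegral.integral_const_mul, ← intervalIntegral.integral_mul_const]
    congr 1
    ext c
    field_simp
  exact ⟨h.1.congr_fun he measurableSet_Ioi, (setIntegral_congr_fun measurableSet_Ioi he).symm.trans h.2⟩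

lemma KK_eq (b : ℝ) (hb : 0 < b) : ∫ c in (0:ℝ)..1, π * (c / (b + c)) = π * KK b := by
  rw [intervalIntegral.integral_const_mul]
  congr 1
  rw [intervalIntegral.integral_eq_sub_of_hasDerivAt (f := fun c => c - b * Real.log (b + c))]
  · unfold KK; rw [add_comm b 1]; simp
  · intro c hc
    rw [Set.uIcc_of_le zero_le_one] at hc
    have := hc.1
    have h := (hasDerivAt_id c).sub ((((hasDerivAt_id c).const_add b).log (by simp; positivity)).const_mul b)
    convert! h using 1
    simp
    field_simp
    ring
  · apply ContinuousOn.intervalIntegrable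
    rw [Set.uIcc_of_le zero_le_one]
    refine ContinuousOn.div (by fun_prop) (by fun_prop) fun c hc => ?_
    have := hc.1
    positivity

lemma intD (B : ℝ) (hB : 0 ≤ B) :
    IntegrableOn (fun x : ℝ => ww x * ∫ b in (0:ℝ)..B, (x / (x ^ 2 + b ^ 2))) (Set.Ioi 0) ∧
    ∫ x in Set.Ioi (0:ℝ), ww x * ∫ b in (0:ℝ)..B, (x / (x ^ 2 + b ^ 2)) = π * ∫ b in (0:ℝ)..B, KK b := by
  have h := fub (fun b x => ww x * (x / (x ^ 2 + b ^ 2)))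
    (fun b => π * KK b) B hB (by have := ww_meas; unfold Function.uncurry; fun_prop)
    (by intro c hc x hx; have hx : 0 < x := hx; have := ww_nonneg x hx.le; positivity)
    (by
      filter_upwards [ae_restrict_mem measurableSet_Ioc] with c hc
      have := intC c hc.1.le
      rwa [KK_eq c hc.1] at this)
    (by
      have : IntegrableOn (fun b => π * KK b) (Set.Icc 0 B) volume :=
        (continuousOn_const.mul (KK_cont B)).integrableOn_Icc
      exact this.mono_set Set.Ioc_subset_Icc_self)
  simpa only [intervalIntegral.integral_const_mul] using h

lemma int_h (x : ℝ) (hx : 0 < x) (B : ℝ) : ∫ b in (0:ℝ)..B, (x / (x ^ 2 + b ^ 2)) = arctan (B / x) := by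
  rw [intervalIntegral.integral_eq_sub_of_hasDerivAt (f := fun b => arctan (b / x))]
  · simp
  · intro b _
    have := (((hasDerivAt_id b).div_const x).arctan)
    convert! this using 1
    simp only [id]
    field_simp
  · apply Continuous.intervalIntegrable
    exact Continuous.div (by fun_prop) (by fun_prop) (fun c => by positivity)

lemma bound_T (x : ℝ) (hx : 0 < x) (N : ℕ) :
    |(∫ b in (0:ℝ)..N, (x / (x ^ 2 + b ^ 2))) - ∑ n ∈ Finset.range N, x / (x ^ 2 + ((n:ℝ) + 1 / 2) ^ 2)|
      ≤ x / (x ^ 2 + 0 ^ 2) := by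
  have hanti : ∀ a b : ℝ, 0 ≤ a → a ≤ b → x / (x ^ 2 + b ^ 2) ≤ x / (x ^ 2 + a ^ 2) := by
    intro a b ha hab
    gcongr
  have ha : AntitoneOn (fun b : ℝ => x / (x ^ 2 + b ^ 2)) (Set.Icc 0 (0 + N)) :=
    fun a ha b hb hab => hanti a b ha.1 hab
  have h1 := ha.integral_le_sum
  have h2 := ha.sum_le_integral
  simp only [zero_add] at h1 h2
  have h3 : ∑ n ∈ Finset.range N, x / (x ^ 2 + ((n:ℝ) + 1 / 2) ^ 2) ≤
      ∑ n ∈ Finset.range N, x / (x ^ 2 + ((n:ℝ)) ^ 2) :=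
    Finset.sum_le_sum fun n _ => hanti _ _ (by positivity) (by linarith)
  have h4 : ∑ n ∈ Finset.range N, x / (x ^ 2 + (((n + 1 : ℕ):ℝ)) ^ 2) ≤
      ∑ n ∈ Finset.range N, x / (x ^ 2 + ((n:ℝ) + 1 / 2) ^ 2) :=
    Finset.sum_le_sum fun n _ => hanti _ _ (by positivity) (by push_cast; linarith)
  have h5 := Finset.sum_range_sub' (fun n : ℕ => x / (x ^ 2 + ((n:ℝ)) ^ 2)) N
  rw [Finset.sum_sub_distrib] at h5
  have h6 : 0 ≤ x / (x ^ 2 + (N:ℝ) ^ 2) := by positivity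
  simp only [Nat.cast_zero] at h5
  rw [abs_le]
  constructor <;> linarith

lemma lim_tanh (x : ℝ) (hx : 0 < x) :
    Tendsto (fun N : ℕ => ∑ n ∈ Finset.range N, x / (x ^ 2 + ((n:ℝ) + 1 / 2) ^ 2)) atTop
      (nhds (π / 2 - π * (1 / (Real.exp (2 * π * x) + 1)))) := by
  set z : ℂ := 1 / 2 + x * Complex.I with hz
  have hzim : z.im = x := by simp [hz]
  have hzm : z ∈ Complex.integerComplement := by
    rw [Complex.mem_integerComplement_iff]
    rintro ⟨n, hn⟩
    have := congrArg Complex.im hn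
    rw [hzim] at this
    simp at this
    linarith
  have h := tendsto_logDeriv_euler_cot_sub hzm
  have hne : ∀ r : ℝ, (x : ℂ) * Complex.I + r ≠ 0 := by
    intro r hr
    have := congrArg Complex.im hr
    simp at this
    linarith
  have hS : ∀ N : ℕ, ((∑ n ∈ Finset.range N, x / (x ^ 2 + ((n:ℝ) + 1 / 2) ^ 2) : ℝ) : ℂ) =
      (∑ j ∈ Finset.range N, cotTerm z j + 1 / z - 1 / (x * Complex.I + ((N + 1 / 2 : ℝ) : ℂ))) * (Complex.I / 2) := by
    intro N
    induction N with
    | zero =>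
      simp [hz]
      rw [add_comm]; simp
    | succ N ih =>
      rw [Finset.sum_range_succ, Complex.ofReal_add, ih, Finset.sum_range_succ]
      have e1 : cotTerm z N = 1 / (x * Complex.I + ((-(N + 1 / 2) : ℝ) : ℂ)) +
          1 / (x * Complex.I + ((((N + 1 : ℕ) : ℝ) + 1 / 2 : ℝ) : ℂ)) := by
        simp only [cotTerm, hz]
        congr 2
        · push_cast; ring
        · push_cast; ring
      rw [e1]
      have e2 : ((x / (x ^ 2 + ((N:ℝ) + 1 / 2) ^ 2) : ℝ) : ℂ) =
          (1 / (x * Complex.I + ((-(N + 1 / 2) : ℝ) : ℂ)) + 1 / (x * Complex.I + ((N + 1 / 2 : ℝ) : ℂ))) * (Complex.I / 2) := by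
        have n1 := hne (-(N + 1 / 2))
        have n2 := hne (N + 1 / 2)
        have n3 : (((x ^ 2 + ((N:ℝ) + 1 / 2) ^ 2) : ℝ) : ℂ) ≠ 0 := by
          rw [Complex.ofReal_ne_zero]; positivity
        rw [Complex.ofReal_div, div_add_div _ _ n1 n2, div_mul_eq_mul_div, div_eq_div_iff n3 (mul_ne_zero n1 n2)]
        push_cast
        linear_combination (-x * ((N:ℂ) + 1 / 2) ^ 2) * Complex.I_sq
      rw [e2]
      ring
  have h0 : Tendsto (fun N : ℕ => 1 / (x * Complex.I + ((N + 1 / 2 : ℝ) : ℂ))) atTop (nhds 0) := by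
    rw [tendsto_zero_iff_norm_tendsto_zero]
    have hinv : Tendsto (fun N : ℕ => ((N : ℝ))⁻¹) atTop (nhds 0) :=
      tendsto_inv_atTop_zero.comp tendsto_natCast_atTop_atTop
    refine squeeze_zero' (Eventually.of_forall fun _ => norm_nonneg _) ?_ hinv
    filter_upwards [eventually_gt_atTop 0] with N hN
    have hN' : (0 : ℝ) < N := by exact_mod_cast hN
    rw [norm_div, norm_one, one_div]
    gcongr
    have := Complex.abs_re_le_norm (x * Complex.I + ((N + 1 / 2 : ℝ) : ℂ))
    have e : (x * Complex.I + ((N + 1 / 2 : ℝ) : ℂ)).re = N + 1 / 2 := by simp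
    rw [e, abs_of_pos (by positivity)] at this
    linarith
  have hl := ((h.add_const (1 / z)).sub h0).mul_const (Complex.I / 2)
  have hv : (π * Complex.cot (π * z) - 1 / z + 1 / z - 0) * (Complex.I / 2) =
      ((π / 2 - π * (1 / (Real.exp (2 * π * x) + 1)) : ℝ) : ℂ) := by
    have e1 : (π : ℂ) * z = ((π * x : ℝ) : ℂ) * Complex.I + π / 2 := by rw [hz]; push_cast; ring
    have e2 : π / 2 - π * (1 / (Real.exp (2 * π * x) + 1)) = π / 2 * (Real.sinh (π * x) / Real.cosh (π * x)) := by
      rw [Real.sinh_eq, Real.cosh_eq, Real.exp_neg, show 2 * π * x = π * x + π * x by ring, Real.exp_add]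
      have := Real.exp_pos (π * x)
      field_simp
      ring
    rw [e2, Complex.cot, e1, Complex.cos_add_pi_div_two, Complex.sin_add_pi_div_two, Complex.sin_mul_I,
      Complex.cos_mul_I]
    push_cast
    have hcosh : Complex.cosh ((π : ℂ) * x) ≠ 0 := by
      have : Complex.cosh ((π : ℂ) * x) = ((Real.cosh (π * x) : ℝ) : ℂ) := by push_cast; rfl
      rw [this, Complex.ofReal_ne_zero]
      exact (Real.cosh_pos _).ne'
    field_simp
    linear_combination (-π * Complex.sinh ((π : ℂ) * x)) * Complex.I_sq
  rw [hv] at hl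
  have hl2 := hl.congr (fun N => (hS N).symm)
  exact_mod_cast (Complex.continuous_re.tendsto _).comp hl2

lemma lim_T (x : ℝ) (hx : 0 < x) :
    Tendsto (fun N : ℕ => (∫ b in (0:ℝ)..N, (x / (x ^ 2 + b ^ 2))) -
      ∑ n ∈ Finset.range N, x / (x ^ 2 + ((n:ℝ) + 1 / 2) ^ 2)) atTop
      (nhds (π * (1 / (Real.exp (2 * π * x) + 1)))) := by
  have h1 : Tendsto (fun N : ℕ => ∫ b in (0:ℝ)..N, (x / (x ^ 2 + b ^ 2))) atTop (nhds (π / 2)) := by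
    simp only [int_h x hx]
    exact ((tendsto_nhds_of_tendsto_nhdsWithin tendsto_arctan_atTop).comp
        (tendsto_natCast_atTop_atTop.atTop_div_const hx))
  convert! h1.sub (lim_tanh x hx) using 1
  congr 1; ring

lemma G_aux : IntegrableOn (fun x : ℝ => ww x * (1 / (Real.exp (2 * π * x) + 1))) (Set.Ioi 0) ∧
    ∫ x in Set.Ioi (0 : ℝ), ww x * (1 / (Real.exp (2 * π * x) + 1)) = 3 / 4 - Real.log 2 := by
  set T : ℕ → ℝ → ℝ := fun N x => ww x * ((∫ b in (0:ℝ)..N, (x / (x ^ 2 + b ^ 2))) -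
      ∑ n ∈ Finset.range N, x / (x ^ 2 + ((n:ℝ) + 1 / 2) ^ 2)) with hT
  have hTe : ∀ N, T N = fun x => ww x * (∫ b in (0:ℝ)..N, (x / (x ^ 2 + b ^ 2))) -
      ∑ n ∈ Finset.range N, ww x * (x / (x ^ 2 + ((n:ℝ) + 1 / 2) ^ 2)) := by
    intro N; ext x; simp only [hT]; rw [mul_sub, Finset.mul_sum]
  have hD := fun N : ℕ => intD N (Nat.cast_nonneg N)
  have hC := fun n : ℕ => intC ((n:ℝ) + 1 / 2) (by positivity)
  have hTi : ∀ N, IntegrableOn (T N) (Set.Ioi 0) := by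
    intro N; rw [hTe]
    exact (hD N).1.sub (integrable_finsetSum _ fun n _ => (hC n).1)
  have hTv : ∀ N, ∫ x in Set.Ioi (0:ℝ), T N x =
      π * ((∫ b in (0:ℝ)..N, KK b) - ∑ n ∈ Finset.range N, KK (n + 1 / 2)) := by
    intro N; rw [hTe, integral_sub (hD N).1 (integrable_finsetSum _ fun n _ => (hC n).1), (hD N).2,
      integral_finsetSum _ fun n _ => (hC n).1, mul_sub, Finset.mul_sum]
    congr 1
    refine Finset.sum_congr rfl fun n _ => ?_
    rw [(hC n).2, KK_eq _ (by positivity)]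
  have hb := (intC 0 le_rfl).1
  have hbd : ∀ N, ∀ᵐ x ∂(volume.restrict (Set.Ioi (0:ℝ))), ‖T N x‖ ≤ ww x * (x / (x ^ 2 + 0 ^ 2)) := by
    intro N
    filter_upwards [ae_restrict_mem measurableSet_Ioi] with x hx
    have hx : 0 < x := hx
    rw [norm_mul, Real.norm_of_nonneg (ww_nonneg x hx.le)]
    exact mul_le_mul_of_nonneg_left (bound_T x hx N) (ww_nonneg x hx.le)
  have hlim : ∀ᵐ x ∂(volume.restrict (Set.Ioi (0:ℝ))), Tendsto (fun N => T N x) atTop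
      (nhds (ww x * (π * (1 / (Real.exp (2 * π * x) + 1))))) := by
    filter_upwards [ae_restrict_mem measurableSet_Ioi] with x hx
    exact (lim_T x hx).const_mul _
  have hdc := tendsto_integral_of_dominated_convergence _ (fun N => (hTi N).aestronglyMeasurable) hb hbd hlim
  simp only [hTv] at hdc
  have hu := tendsto_nhds_unique hdc (KK_lim.const_mul π)
  have hmul : ∀ x : ℝ, ww x * (π * (1 / (Real.exp (2 * π * x) + 1))) =
    π * (ww x * (1 / (Real.exp (2 * π * x) + 1))) := fun x => by ring
  constructor
  · have hm : AEStronglyMeasurable (fun x : ℝ => ww x * (π * (1 / (Real.exp (2 * π * x) + 1))))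
        (volume.restrict (Set.Ioi (0:ℝ))) := by
      have := ww_meas
      apply Measurable.aestronglyMeasurable
      fun_prop
    have hi : IntegrableOn (fun x : ℝ => ww x * (π * (1 / (Real.exp (2 * π * x) + 1)))) (Set.Ioi (0:ℝ)) := by
      refine Integrable.mono' hb hm ?_
      have hb' := ae_all_iff.mpr hbd
      filter_upwards [hb', hlim] with x h1 h2
      exact le_of_tendsto h2.norm (Eventually.of_forall h1)
    have := hi.const_mul (π⁻¹)
    refine this.congr (Eventually.of_forall fun x => ?_)
    simp only []
    rw [hmul, inv_mul_cancel_left₀ pi_ne_zero]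
  · simp only [hmul, integral_const_mul] at hu
    exact mul_left_cancel₀ pi_ne_zero hu


/-- ∫₀^∞ x log(1+x²)/(e^{2πx}+1) dx = 3/4 − (23/24) log 2 + (1/2) ζ'(−1). -/
theorem integral_x_log_one_add_sq :
    ((∫ x in Set.Ioi (0 : ℝ),
        x * Real.log (1 + x ^ 2) / (Real.exp (2 * π * x) + 1) : ℝ) : ℂ) =
      3 / 4 - (23 / 24) * Real.log 2 + (1 / 2) * deriv riemannZeta (-1) := by
  obtain ⟨i1, v1⟩ := F0_aux
  obtain ⟨i2, v2⟩ := G_aux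
  have he : ∫ x in Set.Ioi (0 : ℝ), x * Real.log (1 + x ^ 2) / (Real.exp (2 * π * x) + 1) =
      ∫ x in Set.Ioi (0 : ℝ), (ww x * (1 / (Real.exp (2 * π * x) + 1)) +
        2 * (x * Real.log x / (Real.exp (2 * π * x) + 1))) := by
    refine setIntegral_congr_fun measurableSet_Ioi fun x hx => ?_
    have hx : 0 < x := hx
    have : Real.log (1 + x ^ 2) = Real.log (1 + 1 / x ^ 2) + 2 * Real.log x := by
      have h2 : 2 * Real.log x = Real.log (x ^ 2) := by rw [Real.log_pow]; norm_num
      rw [h2, ← Real.log_mul (by positivity) (by positivity)]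
      congr 1
      field_simp
      ring
    simp only [ww, this]
    ring
  rw [he, integral_add i2 (i1.const_mul 2), v2, integral_const_mul]
  push_cast
  rw [v1]
  ring
end
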